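/- For every m ≥ 1, the covering type of complex projective space ℂP^m satisfies ct(ℂP^m) ≥ (m+1)²; that is, for every topological space Y homotopy equivalent to ℂP^m and every good cover U of Y, U has at least (m+1)² members. -/

import Mathlib

/-- A good cover of `Y`: a finite family of open subsets covering `Y` such that every
nonempty intersection of (finitely many) members is contractible. -/
def IsGoodCover {Y : Type*} [TopologicalSpace Y] (U : Finset (Set Y)) : Prop :=
  (∀ s ∈ U, IsOpen s) ∧ (⋃₀ (U : Set (Set Y)) = Set.univ) ∧
    ∀ T ⊆ U, T.Nonempty → (⋂₀ (T : Set (Set Y))).Nonempty →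
      ContractibleSpace ↥(⋂₀ (T : Set (Set Y)))

/-- Complex projective space `ℂP^m`: the projectivization of `ℂ^{m+1}`, i.e. the quotient
of `ℂ^{m+1} ∖ {0}` by the scalar action of `ℂ ∖ {0}`. -/
def CP (m : ℕ) : Type := Projectivization ℂ (Fin (m + 1) → ℂ)

/-- The quotient topology on `ℂP^m`. -/
instance (m : ℕ) : TopologicalSpace (CP m) :=
  inferInstanceAs (TopologicalSpace
    (Quotient (projectivizationSetoid ℂ (Fin (m + 1) → ℂ))))

/-! The reduction mod `2` of the first Chern class of the tautological line bundle, pulled back to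
`Y`, is represented by a cocycle `c` of degree `2` on the nerve of the cover: it is the coboundary
of logarithms of the transition functions, divided by `2πi`. Such logarithms exist because double
intersections are contractible, and the coboundary is a constant integer on each triple
intersection because triple intersections are connected.

On the one hand, `c ^ m` is not a coboundary on the nerve. The map `S^{2m} → ℂP^m` induced by an
injective real linear map `ℝ^{2m + 1} → ℂ^{m + 1}` is even, and its lift to homogeneous coordinates
is an odd nowhere vanishing section of the tautological bundle. Comparing logarithms of this section
shows that `c` pulls back to the square of the class of the double cover `S^{2m} → ℝP^{2m}`. In
terms of chains, every factor `c` lowers the dimension of a hemisphere by two and `c ^ m` takes an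
odd value on the antipodally glued hemisphere of dimension `2m`. A discrete parallel transport
along the homotopy from the identity of `ℂP^m` to its factorization through `Y` carries the odd lift
over to `Y`.

On the other hand, `c ^ m` is a coboundary on any complex with fewer than
`1 + 3 + ⋯ + (2m + 1) = (m + 1)²` vertices, by induction on `m`. Unless `c ^ m` vanishes for
dimension reasons, there is a simplex with `2m + 1` vertices. The cocycle `c` is a coboundary on
this simplex and `c ^ (m - 1)` is one on the full subcomplex on the remaining vertices, so their
product is one on the whole complex, as in the Lusternik–Schnirelmann theorem. -/

namespace CoveringType

open Set Filter Topology Uniformity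
open scoped Matrix

section Chains

variable {α β M : Type*} [AddCommGroup M] [Module (ZMod 2) M]

/-- Ordered simplicial chains with coefficients in `ℤ/2` and vertices in `α`; a list of length
`k + 1` is a simplex of dimension `k`. Neither distinct vertices nor a nonempty list are required,
and each simplicial complex is given by the set of its lists. -/
abbrev Chain (α : Type*) := List α →₀ ZMod 2

/-- Ordered simplicial cochains with coefficients in `ℤ/2`, of all degrees at once. -/
abbrev Cochain (α : Type*) := List α → ZMod 2

namespace Chain

lemma apply_eq_of_single {f g : Chain α →ₗ[ZMod 2] M}
    (h : ∀ l, f (Finsupp.single l 1) = g (Finsupp.single l 1)) (c : Chain α) : f c = g c :=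
  LinearMap.congr_fun (Finsupp.lhom_ext' fun l => LinearMap.ext_ring (h l)) c

/-- The cone operator, which adds the vertex `v` in front of every simplex. -/
noncomputable def cone (v : α) : Chain α →ₗ[ZMod 2] Chain α :=
  Finsupp.lmapDomain _ _ (List.cons v)

@[simp] lemma cone_single (v : α) (l : List α) (a : ZMod 2) :
    cone v (Finsupp.single l a) = Finsupp.single (v :: l) a := by
  simp [cone]

/-- The boundary of a simplex, augmented: the boundary of a vertex is the empty simplex. -/
noncomputable def boundaryList : List α → Chain α
  | [] => 0
  | v :: l => Finsupp.single l 1 + cone v (boundaryList l)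

/-- The (augmented) simplicial boundary operator. -/
noncomputable def boundary : Chain α →ₗ[ZMod 2] Chain α :=
  Finsupp.linearCombination (ZMod 2) boundaryList

@[simp] lemma boundary_single (l : List α) :
    boundary (Finsupp.single l 1) = boundaryList l := by
  simp [boundary]

/-- The chain map induced by a map of vertices. -/
noncomputable def map (f : α → β) : Chain α →ₗ[ZMod 2] Chain β :=
  Finsupp.lmapDomain _ _ (List.map f)

@[simp] lemma map_single (f : α → β) (l : List α) (a : ZMod 2) :
    map f (Finsupp.single l a) = Finsupp.single (l.map f) a := by
  simp [map]

lemma map_map {γ : Type*} (g : β → γ) (f : α → β) (c : Chain α) :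
    map g (map f c) = map (g ∘ f) c :=
  apply_eq_of_single (f := map g ∘ₗ map f) (by simp) c

lemma boundary_cone (v : α) (c : Chain α) :
    boundary (cone v c) = c + cone v (boundary c) :=
  apply_eq_of_single (f := boundary ∘ₗ cone v) (g := .id + cone v ∘ₗ boundary)
    (by simp [boundaryList]) c

lemma boundary_boundaryList (l : List α) : boundary (boundaryList l) = 0 := by
  induction l with
  | nil => simp [boundaryList]
  | cons v l ih => simp [boundaryList, boundary_cone, ih, ZModModule.add_self]

lemma map_cone (f : α → β) (v : α) (c : Chain α) :
    map f (cone v c) = cone (f v) (map f c) :=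
  apply_eq_of_single (f := map f ∘ₗ cone v) (g := cone (f v) ∘ₗ map f) (by simp) c

lemma boundaryList_map (f : α → β) (l : List α) :
    boundaryList (l.map f) = map f (boundaryList l) := by
  induction l with
  | nil => simp [boundaryList]
  | cons v l ih => simp [boundaryList, map_cone, ih]

lemma boundary_map (f : α → β) (c : Chain α) : boundary (map f c) = map f (boundary c) :=
  apply_eq_of_single (f := boundary ∘ₗ map f) (g := map f ∘ₗ boundary)
    (by simp [boundaryList_map]) c

/-- The chains of the complex whose simplices are the lists in `P`. -/
noncomputable def chainsOn (P : Set (List α)) : Submodule (ZMod 2) (Chain α) :=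
  Finsupp.supported (ZMod 2) (ZMod 2) P

variable {P Q : Set (List α)} {c : Chain α}

lemma single_mem_chainsOn {l : List α} (h : l ∈ P) (a : ZMod 2) :
    Finsupp.single l a ∈ chainsOn P :=
  Finsupp.single_mem_supported _ _ h

lemma map_mem_of_mem_chainsOn (N : Submodule (ZMod 2) M) (f : Chain α →ₗ[ZMod 2] M)
    (h : ∀ l ∈ P, f (Finsupp.single l 1) ∈ N) (hc : c ∈ chainsOn P) : f c ∈ N := by
  have hP : chainsOn P ≤ N.comap f := by
    rw [chainsOn, Finsupp.supported_eq_span_single, Submodule.span_le]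
    rintro _ ⟨l, hl, rfl⟩
    exact h l hl
  exact hP hc

lemma apply_eq_of_mem_chainsOn {f g : Chain α →ₗ[ZMod 2] M}
    (h : ∀ l ∈ P, f (Finsupp.single l 1) = g (Finsupp.single l 1)) (hc : c ∈ chainsOn P) :
    f c = g c := by
  have hfg := map_mem_of_mem_chainsOn ⊥ (f - g) (fun l hl => by simp [h l hl]) hc
  simpa [sub_eq_zero] using hfg

lemma chainsOn_mono (h : P ⊆ Q) (hc : c ∈ chainsOn P) : c ∈ chainsOn Q :=
  Finsupp.supported_mono h hc

lemma cone_mem_chainsOn {v : α} (h : ∀ l ∈ P, v :: l ∈ Q) (hc : c ∈ chainsOn P) :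
    cone v c ∈ chainsOn Q :=
  map_mem_of_mem_chainsOn _ (cone v)
    (fun l hl => cone_single v l 1 ▸ single_mem_chainsOn (h l hl) 1) hc

lemma map_mem_chainsOn {f : α → β} {Q : Set (List β)} (h : ∀ l ∈ P, l.map f ∈ Q)
    (hc : c ∈ chainsOn P) : map f c ∈ chainsOn Q :=
  map_mem_of_mem_chainsOn _ (map f)
    (fun l hl => map_single f l 1 ▸ single_mem_chainsOn (h l hl) 1) hc

lemma boundaryList_mem_chainsOn (l : List α) :
    boundaryList l ∈ chainsOn {t | t.Sublist l ∧ t.length + 1 = l.length} := by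
  induction l with
  | nil => simp [boundaryList]
  | cons v l ih =>
    refine add_mem (single_mem_chainsOn ?_ 1) ?_
    · exact ⟨List.sublist_cons_self v l, by simp⟩
    refine cone_mem_chainsOn (fun t ht => ?_) ih
    exact ⟨ht.1.cons_cons v, by simp [ht.2]⟩

/-- The prism operator of a pair of vertex maps on a simplex. -/
noncomputable def prismList (f g : α → β) : List α → Chain β
  | [] => 0
  | v :: l => Finsupp.single (f v :: g v :: l.map g) 1 + cone (f v) (prismList f g l)

/-- The prism operator, a chain homotopy from `map f` to `map g`. -/
noncomputable def prism (f g : α → β) : Chain α →ₗ[ZMod 2] Chain β :=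
  Finsupp.linearCombination (ZMod 2) (prismList f g)

@[simp] lemma prism_single (f g : α → β) (l : List α) :
    prism f g (Finsupp.single l 1) = prismList f g l := by
  simp [prism]

lemma prism_cone (f g : α → β) (v : α) (c : Chain α) :
    prism f g (cone v c) = cone (f v) (cone (g v) (map g c)) + cone (f v) (prism f g c) :=
  apply_eq_of_single (f := prism f g ∘ₗ cone v)
    (g := cone (f v) ∘ₗ cone (g v) ∘ₗ map g + cone (f v) ∘ₗ prism f g) (by simp [prismList]) c

lemma boundary_prismList (f g : α → β) (l : List α) :
    boundary (prismList f g l) =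
      prism f g (boundaryList l) + Finsupp.single (l.map f) 1 + Finsupp.single (l.map g) 1 := by
  induction l with
  | nil => simp [boundaryList, prismList, ZModModule.add_self]
  | cons v l ih =>
    simp only [prismList, boundaryList, map_add, boundary_cone, boundary_single, prism_cone,
      prism_single, cone_single, boundaryList_map, ih, List.map_cons]
    linear_combination (norm := abel)
      ZModModule.add_self (Finsupp.single (f v :: l.map g) (1 : ZMod 2))

lemma boundary_prism (f g : α → β) (c : Chain α) :
    boundary (prism f g c) = prism f g (boundary c) + map f c + map g c :=
  apply_eq_of_single (f := boundary ∘ₗ prism f g) (g := prism f g ∘ₗ boundary + map f + map g)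
    (by simp [boundary_prismList]) c

lemma prism_mem_chainsOn {f g : α → β} {Q : Set (List β)}
    (h : ∀ l ∈ P, ∀ t, (∀ y ∈ t, ∃ x ∈ l, y = f x ∨ y = g x) → t.length = l.length + 1 → t ∈ Q)
    (hc : c ∈ chainsOn P) : prism f g c ∈ chainsOn Q := by
  have hprism (l : List α) : prismList f g l ∈
      chainsOn {t | (∀ y ∈ t, ∃ x ∈ l, y = f x ∨ y = g x) ∧ t.length = l.length + 1} := by
    induction l with
    | nil => simp [prismList]
    | cons v l ih =>
      refine add_mem (single_mem_chainsOn ?_ 1) (cone_mem_chainsOn (fun t ht => ?_) ih)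
      · grind
      · grind
  exact map_mem_of_mem_chainsOn _ (prism f g) (fun l hl => by
    rw [prism_single]
    exact chainsOn_mono (fun t ht => h l hl t ht.1 ht.2) (hprism l)) hc

end Chain

namespace Cochain

/-- The value of a cochain on a chain. -/
noncomputable def eval (x : Cochain α) : Chain α →ₗ[ZMod 2] ZMod 2 :=
  Finsupp.linearCombination (ZMod 2) x

@[simp] lemma eval_single (x : Cochain α) (l : List α) :
    eval x (Finsupp.single l 1) = x l := by
  simp [eval]

lemma eval_cone (x : Cochain α) (v : α) (c : Chain α) :
    eval x (Chain.cone v c) = eval (fun t => x (v :: t)) c :=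
  Chain.apply_eq_of_single (f := eval x ∘ₗ Chain.cone v) (by simp) c

/-- The simplicial coboundary operator, by recursion on the simplex. -/
def coboundary : Cochain α → Cochain α
  | _, [] => 0
  | x, v :: l => x l + coboundary (fun t => x (v :: t)) l

lemma coboundary_eq_eval_boundaryList (x : Cochain α) (l : List α) :
    coboundary x l = eval x (Chain.boundaryList l) := by
  induction l generalizing x with
  | nil => simp [coboundary, Chain.boundaryList]
  | cons v l ih => simp [coboundary, Chain.boundaryList, eval_cone, ih]

lemma eval_coboundary (x : Cochain α) (c : Chain α) :
    eval (coboundary x) c = eval x (Chain.boundary c) :=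
  Chain.apply_eq_of_single (f := eval (coboundary x)) (g := eval x ∘ₗ Chain.boundary)
    (by simp [coboundary_eq_eval_boundaryList]) c

lemma coboundary_coboundary (x : Cochain α) : coboundary (coboundary x) = 0 := by
  ext l
  rw [coboundary_eq_eval_boundaryList, eval_coboundary, Chain.boundary_boundaryList, map_zero,
    Pi.zero_apply]

lemma coboundary_add (x y : Cochain α) : coboundary (x + y) = coboundary x + coboundary y := by
  ext l
  simp [coboundary_eq_eval_boundaryList, eval, Finsupp.linearCombination_apply, mul_add,
    Finsupp.sum_add]

lemma coboundary_congr {x y : Cochain α} {l : List α}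
    (h : ∀ t, t.Sublist l → t.length + 1 = l.length → x t = y t) :
    coboundary x l = coboundary y l := by
  simp only [coboundary_eq_eval_boundaryList]
  exact Chain.apply_eq_of_mem_chainsOn (fun t ht => by simp [h t ht.1 ht.2])
    (Chain.boundaryList_mem_chainsOn l)

lemma eval_map (x : Cochain β) (f : α → β) (c : Chain α) :
    eval x (Chain.map f c) = eval (fun l => x (l.map f)) c :=
  Chain.apply_eq_of_single (f := eval x ∘ₗ Chain.map f) (by simp) c

lemma eval_congr {x y : Cochain α} {P : Set (List α)} {c : Chain α} (h : ∀ l ∈ P, x l = y l)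
    (hc : c ∈ Chain.chainsOn P) : eval x c = eval y c :=
  Chain.apply_eq_of_mem_chainsOn (fun l hl => by simp [h l hl]) hc

lemma coboundary_map (x : Cochain β) (f : α → β) (l : List α) :
    coboundary (fun t => x (t.map f)) l = coboundary x (l.map f) := by
  simp [coboundary_eq_eval_boundaryList, Chain.boundaryList_map, eval_map]

/-- The lists in `K` are the simplices of an abstract simplicial complex: membership depends only
on the set of vertices, and passes to subsets. -/
def IsComplex (K : Set (List α)) : Prop :=
  ∀ l ∈ K, ∀ t, t ⊆ l → t ∈ K

/-- `x` is a coboundary on the complex `K`, with a primitive that vanishes on the empty simplex. -/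
def IsCoboundaryOn (K : Set (List α)) (x : Cochain α) : Prop :=
  ∃ y : Cochain α, y [] = 0 ∧ ∀ l ∈ K, x l = coboundary y l

lemma IsCoboundaryOn.add {K : Set (List α)} {x y : Cochain α} (hx : IsCoboundaryOn K x)
    (hy : IsCoboundaryOn K y) : IsCoboundaryOn K (x + y) := by
  obtain ⟨u, hu, hxu⟩ := hx
  obtain ⟨v, hv, hyv⟩ := hy
  exact ⟨u + v, by simp [hu, hv], fun l hl => by simp [coboundary_add, hxu l hl, hyv l hl]⟩

end Cochain

end Chains

section Sorting

variable {ι : Type*} [LinearOrder ι]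

namespace Chain

/-- Insertion of the vertex `v` into a simplex with increasing vertices; the result is `0` if `v`
is one of them. -/
noncomputable def insertList (v : ι) : List ι → Chain ι
  | [] => Finsupp.single [v] 1
  | a :: l =>
    if v < a then Finsupp.single (v :: a :: l) 1
    else if v = a then 0 else cone a (insertList v l)

/-- The linear extension of `insertList v`. -/
noncomputable def insert (v : ι) : Chain ι →ₗ[ZMod 2] Chain ι :=
  Finsupp.linearCombination (ZMod 2) (insertList v)

@[simp] lemma insert_single (v : ι) (l : List ι) :
    insert v (Finsupp.single l 1) = insertList v l := by
  simp [insert]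

/-- The simplex with the vertices of `l` in increasing order, or `0` if `l` has a repetition. -/
noncomputable def sortList : List ι → Chain ι
  | [] => Finsupp.single [] 1
  | v :: l => insert v (sortList l)

/-- The linear extension of `sortList`. -/
noncomputable def sort : Chain ι →ₗ[ZMod 2] Chain ι :=
  Finsupp.linearCombination (ZMod 2) sortList

@[simp] lemma sort_single (l : List ι) : sort (Finsupp.single l 1) = sortList l := by
  simp [sort]

lemma insert_eq_cone {v : ι} {c : Chain ι} (hc : c ∈ chainsOn {l | ∀ b ∈ l, v < b}) :
    insert v c = cone v c := by
  refine apply_eq_of_mem_chainsOn (fun l hl => ?_) hc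
  cases l with
  | nil => simp [insertList]
  | cons a l => simp [insertList, hl a]

lemma insert_cone_of_lt {v a : ι} (h : a < v) (c : Chain ι) :
    insert v (cone a c) = cone a (insert v c) :=
  apply_eq_of_single (f := insert v ∘ₗ cone a) (g := cone a ∘ₗ insert v)
    (by simp [insertList, h.not_gt, h.ne']) c

lemma insert_cone_self (a : ι) (c : Chain ι) : insert a (cone a c) = 0 :=
  apply_eq_of_single (f := insert a ∘ₗ cone a) (g := 0) (by simp [insertList]) c

lemma insertList_mem_chainsOn (v : ι) {l : List ι} (hl : l.Pairwise (· < ·)) :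
    insertList v l ∈ chainsOn {t | t.Pairwise (· < ·) ∧ t ⊆ v :: l} := by
  induction l with
  | nil => exact single_mem_chainsOn (by simp) 1
  | cons a l ih =>
    have hal := List.pairwise_cons.1 hl
    rcases lt_trichotomy v a with h | rfl | h
    · rw [insertList, if_pos h]
      refine single_mem_chainsOn ?_ 1
      grind
    · simp [insertList]
    · rw [insertList, if_neg h.not_gt, if_neg h.ne']
      refine cone_mem_chainsOn (fun t ht => ?_) (ih hal.2)
      obtain ⟨ht, htl⟩ := ht
      exact ⟨List.pairwise_cons.2 ⟨by grind, ht⟩, by grind⟩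

lemma boundary_insertList (v : ι) {l : List ι} (hl : l.Pairwise (· < ·)) :
    boundary (insertList v l) = Finsupp.single l 1 + insert v (boundaryList l) := by
  induction l with
  | nil => simp [insertList, boundaryList]
  | cons a l ih =>
    have hal := List.pairwise_cons.1 hl
    rcases lt_trichotomy v a with h | rfl | h
    · have hlt : boundaryList (a :: l) ∈ chainsOn {t | ∀ b ∈ t, v < b} :=
        chainsOn_mono (fun t ht b hb => by grind [ht.1.subset hb])
          (boundaryList_mem_chainsOn (a :: l))
      rw [insert_eq_cone hlt, insertList, if_pos h, boundary_single, boundaryList]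
    · have hvl : insert v (Finsupp.single l 1) = Finsupp.single (v :: l) 1 := by
        rw [insert_eq_cone (single_mem_chainsOn (P := {t | ∀ b ∈ t, v < b}) hal.1 1), cone_single]
      simp [insertList, boundaryList, insert_cone_self, -insert_single, hvl, ZModModule.add_self]
    · simp only [insertList, h.not_gt, h.ne', if_false, boundary_cone, ih hal.2, boundaryList,
        map_add, cone_single, insert_single, insert_cone_of_lt h]
      abel

lemma boundary_insert (v : ι) {c : Chain ι} (hc : c ∈ chainsOn {l | l.Pairwise (· < ·)}) :
    boundary (insert v c) = c + insert v (boundary c) :=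
  apply_eq_of_mem_chainsOn (f := boundary ∘ₗ insert v) (g := .id + insert v ∘ₗ boundary)
    (fun l hl => by simpa using boundary_insertList v hl) hc

lemma sortList_mem_chainsOn (l : List ι) :
    sortList l ∈ chainsOn {t | t.Pairwise (· < ·) ∧ t ⊆ l} := by
  induction l with
  | nil => exact single_mem_chainsOn (by simp) 1
  | cons v l ih =>
    refine map_mem_of_mem_chainsOn _ (insert v) (fun t ht => ?_) ih
    rw [insert_single]
    exact chainsOn_mono (fun u hu => ⟨hu.1, List.Subset.trans hu.2 (List.cons_subset_cons v ht.2)⟩)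
      (insertList_mem_chainsOn v ht.1)

lemma sort_cone (v : ι) (c : Chain ι) : sort (cone v c) = insert v (sort c) :=
  apply_eq_of_single (f := sort ∘ₗ cone v) (g := insert v ∘ₗ sort) (by simp [sortList]) c

lemma boundary_sortList_cons (v : ι) (l : List ι) :
    boundary (sortList (v :: l)) = sortList l + insert v (boundary (sortList l)) :=
  boundary_insert v (chainsOn_mono (fun _ ht => ht.1) (sortList_mem_chainsOn l))

lemma boundary_sortList (l : List ι) : boundary (sortList l) = sort (boundaryList l) := by
  induction l with
  | nil => simp [sortList, boundaryList]
  | cons v l ih => simp [boundary_sortList_cons, boundaryList, sort_cone, ih]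

/-- A chain homotopy from the identity to `sort`, on a simplex. Its recursion iterates the
homotopy `cone v ∘ (cone v + insert v)` from `cone v` to `insert v`. -/
noncomputable def sortHomotopyList : List ι → Chain ι
  | [] => 0
  | v :: l => cone v (sortHomotopyList l + cone v (sortList l) + sortList (v :: l))

/-- The linear extension of `sortHomotopyList`. -/
noncomputable def sortHomotopy : Chain ι →ₗ[ZMod 2] Chain ι :=
  Finsupp.linearCombination (ZMod 2) sortHomotopyList

@[simp] lemma sortHomotopy_single (l : List ι) :
    sortHomotopy (Finsupp.single l 1) = sortHomotopyList l := by
  simp [sortHomotopy]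

lemma sortHomotopy_cone (v : ι) (c : Chain ι) :
    sortHomotopy (cone v c) = cone v (sortHomotopy c + cone v (sort c) + sort (cone v c)) :=
  apply_eq_of_single (f := sortHomotopy ∘ₗ cone v)
    (g := cone v ∘ₗ (sortHomotopy + cone v ∘ₗ sort + sort ∘ₗ cone v))
    (by simp [sortHomotopyList]) c

lemma boundary_sortHomotopyList (l : List ι) :
    boundary (sortHomotopyList l) =
      sortHomotopy (boundaryList l) + Finsupp.single l 1 + sortList l := by
  induction l with
  | nil => simp [sortHomotopyList, sortList, boundaryList, ZModModule.add_self]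
  | cons v l ih =>
    have hcone : cone v (boundary (sortHomotopyList l)) =
        cone v (sortHomotopy (boundaryList l)) + Finsupp.single (v :: l) 1 +
          cone v (sortList l) := by
      simp [ih]
    simp only [sortHomotopyList, boundaryList, map_add, boundary_cone, sortHomotopy_cone,
      sortHomotopy_single, sort_cone, boundary_sortList_cons, hcone, ← boundary_sortList]
    linear_combination (norm := abel) (2 : ℕ) • ZModModule.add_self (cone v (sortList l))

lemma sortHomotopyList_mem_chainsOn (l : List ι) :
    sortHomotopyList l ∈ chainsOn {t | t ⊆ l} := by
  induction l with
  | nil => simp [sortHomotopyList]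
  | cons v l ih =>
    have hsort : sortList l ∈ chainsOn {t | t ⊆ l} :=
      chainsOn_mono (fun _ ht => ht.2) (sortList_mem_chainsOn l)
    have hsort' : sortList (v :: l) ∈ chainsOn {t | t ⊆ v :: l} :=
      chainsOn_mono (fun _ ht => ht.2) (sortList_mem_chainsOn (v :: l))
    refine cone_mem_chainsOn (P := {t | t ⊆ v :: l}) (by simp)
      (add_mem (add_mem (chainsOn_mono ?_ ih) (cone_mem_chainsOn ?_ hsort)) hsort')
    · exact fun t ht => List.subset_cons_of_subset v ht
    · exact fun t ht => List.cons_subset_cons v ht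

end Chain

namespace Cochain

theorem isCoboundaryOn_of_vanishes_on_sorted {K : Set (List ι)}
    (hK : IsComplex K) {x : Cochain ι} (hcocycle : ∀ l ∈ K, coboundary x l = 0)
    (hsorted : ∀ l ∈ K, l.Pairwise (· < ·) → x l = 0) : IsCoboundaryOn K x := by
  refine ⟨fun t => eval x (Chain.sortHomotopyList t), by simp [Chain.sortHomotopyList],
    fun l hl => ?_⟩
  have hboundary : eval x (Chain.boundary (Chain.sortHomotopyList l)) = 0 := by
    rw [← eval_coboundary, eval_congr (y := 0) (fun t ht => hcocycle t (hK l hl t ht))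
      (Chain.sortHomotopyList_mem_chainsOn l)]
    simp [eval]
  have hsort : eval x (Chain.sortList l) = 0 := by
    rw [eval_congr (y := 0) (fun t ht => hsorted t (hK l hl t ht.2) ht.1)
      (Chain.sortList_mem_chainsOn l)]
    simp [eval]
  have hhomotopy : eval x (Chain.sortHomotopy (Chain.boundaryList l)) =
      coboundary (fun t => eval x (Chain.sortHomotopyList t)) l := by
    rw [coboundary_eq_eval_boundaryList]
    exact Chain.apply_eq_of_single (f := eval x ∘ₗ Chain.sortHomotopy) (by simp) _
  rw [Chain.boundary_sortHomotopyList, map_add, map_add, hhomotopy, hsort, add_zero,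
    eval_single] at hboundary
  exact (CharTwo.add_eq_zero.1 hboundary).symm

end Cochain

end Sorting

section CupProduct

variable {ι : Type*}

lemma exists_linearOrder_isLowerSet (σ : Set ι) : ∃ _ : LinearOrder ι, IsLowerSet σ := by
  classical
  let : LinearOrder ι := IsWellOrder.linearOrder WellOrderingRel
  let key (a : ι) : Bool ×ₗ ι := toLex (decide (a ∉ σ), a)
  have hkey : Function.Injective key := fun a b hab => congrArg (fun p => (ofLex p).2) hab
  refine ⟨LinearOrder.lift' key hkey, fun a b (hab : key b ≤ key a) ha => ?_⟩
  by_contra hb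
  simp [key, Prod.Lex.toLex_le_toLex, ha, hb, not_lt.2 (Bool.le_true _)] at hab

namespace Cochain

/-- The cup product of a cochain `x` of degree `k` (whose values on simplices of other dimensions
are ignored) with a cochain `y`. -/
def cup : ℕ → Cochain ι → Cochain ι → Cochain ι
  | _, _, _, [] => 0
  | 0, x, y, a :: l => x [a] * y (a :: l)
  | k + 1, x, y, a :: l => cup k (fun t => x (a :: t)) y l

@[simp] lemma cup_nil (k : ℕ) (x y : Cochain ι) : cup k x y [] = 0 := by
  cases k <;> rfl

lemma cup_eq_ite (k : ℕ) (x y : Cochain ι) (l : List ι) :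
    cup k x y l = if k < l.length then x (l.take (k + 1)) * y (l.drop k) else 0 := by
  induction k generalizing x l with
  | zero => cases l <;> simp [cup]
  | succ k ih => cases l <;> simp [cup, ih]

lemma cup_add_left (k : ℕ) (x x' y : Cochain ι) : cup k (x + x') y = cup k x y + cup k x' y := by
  ext l
  simp only [cup_eq_ite, Pi.add_apply, add_mul]
  split_ifs <;> simp

lemma cup_add_right (k : ℕ) (x y y' : Cochain ι) : cup k x (y + y') = cup k x y + cup k x y' := by
  ext l
  simp only [cup_eq_ite, Pi.add_apply, mul_add]
  split_ifs <;> simp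

lemma coboundary_const_mul (a : ZMod 2) (y : Cochain ι) (l : List ι) :
    coboundary (fun t => a * y t) l = a * coboundary y l := by
  induction l generalizing y with
  | nil => simp [coboundary]
  | cons v l ih => simp only [coboundary, ih, mul_add]

theorem coboundary_cup (k : ℕ) (x : Cochain ι) {y : Cochain ι} (hy : y [] = 0) :
    coboundary (cup k x y) = cup (k + 1) (coboundary x) y + cup k x (coboundary y) := by
  ext l
  induction k generalizing x l with
  | zero =>
    rcases l with _ | ⟨a, _ | ⟨b, l⟩⟩
    · simp [coboundary]
    · simp [coboundary, cup, hy]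
    · simp only [coboundary, cup, coboundary_const_mul, Pi.add_apply]
      linear_combination -CharTwo.add_self_eq_zero (x [a] * y (b :: l))
  | succ k ih =>
    cases l with
    | nil => simp [coboundary]
    | cons a l =>
      let xa : Cochain ι := fun t => x (a :: t)
      change cup (k + 1) x y l + coboundary (cup k xa y) l =
        cup (k + 1) (x + coboundary xa) y l + cup k xa (coboundary y) l
      rw [ih, cup_add_left, Pi.add_apply, Pi.add_apply, add_assoc]

section OnComplex

variable {K : Set (List ι)} {k : ℕ} {x y : Cochain ι} {l : List ι}

lemma cup_eq_zero_of_left (hK : IsComplex K) (hl : l ∈ K)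
    (hx : ∀ t ∈ K, t.length = k + 1 → x t = 0) : cup k x y l = 0 := by
  rw [cup_eq_ite]
  split_ifs with hk
  · rw [hx _ (hK l hl _ (List.take_subset _ _)) (by simpa using hk), zero_mul]
  · rfl

lemma cup_eq_zero_of_right (hK : IsComplex K) (hl : l ∈ K)
    (hy : ∀ t ∈ K, y t = 0) : cup k x y l = 0 := by
  rw [cup_eq_ite]
  split_ifs with hk
  · rw [hy _ (hK l hl _ (List.drop_subset _ _)), mul_zero]
  · rfl

/-- `x`, as a cochain of degree `k`, is a cocycle on the complex `K`. -/
def IsCocycleOn (K : Set (List ι)) (k : ℕ) (x : Cochain ι) : Prop :=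
  ∀ l ∈ K, l.length = k + 2 → coboundary x l = 0

lemma IsCocycleOn.add_coboundary (hx : IsCocycleOn K k x) (y : Cochain ι) :
    IsCocycleOn K k (x + coboundary y) := fun l hl hlen => by
  simp [coboundary_add, coboundary_coboundary, hx l hl hlen]

lemma IsCocycleOn.coboundary_cup_eq (hK : IsComplex K) (hx : IsCocycleOn K k x) (hy : y [] = 0)
    (hl : l ∈ K) : coboundary (cup k x y) l = cup k x (coboundary y) l := by
  rw [coboundary_cup k x hy, Pi.add_apply, cup_eq_zero_of_left hK hl hx, zero_add]

lemma IsCocycleOn.isCoboundaryOn_cup_coboundary (hK : IsComplex K) (hx : IsCocycleOn K k x)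
    (hy : y [] = 0) : IsCoboundaryOn K (cup k x (coboundary y)) :=
  ⟨cup k x y, cup_nil k x y, fun _ hl => (hx.coboundary_cup_eq hK hy hl).symm⟩

lemma isCoboundaryOn_coboundary_cup (hK : IsComplex K) (hy : y [] = 0)
    (hycocycle : ∀ l ∈ K, coboundary y l = 0) :
    IsCoboundaryOn K (cup (k + 1) (coboundary x) y) :=
  ⟨cup k x y, cup_nil k x y, fun l hl => by
    rw [coboundary_cup k x hy, Pi.add_apply, cup_eq_zero_of_right hK hl hycocycle, add_zero]⟩

/-- The Lusternik–Schnirelmann principle. When the vertices of `σ` are ordered first, each sorted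
simplex has its front face in `σ` or its back face off `σ`. -/
theorem isCoboundaryOn_cup_of_vanishes (hK : IsComplex K) (hx : IsCocycleOn K k x) (hy : y [] = 0)
    (hycocycle : ∀ l ∈ K, coboundary y l = 0) {σ : Set ι}
    (hxσ : ∀ l ∈ K, (∀ a ∈ l, a ∈ σ) → l.length = k + 1 → x l = 0)
    (hyσ : ∀ l ∈ K, (∀ a ∈ l, a ∉ σ) → y l = 0) : IsCoboundaryOn K (cup k x y) := by
  obtain ⟨_, hσ⟩ := exists_linearOrder_isLowerSet σ
  refine isCoboundaryOn_of_vanishes_on_sorted hK (fun l hl => ?_) fun l hl hsorted => ?_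
  · rw [hx.coboundary_cup_eq hK hy hl, cup_eq_zero_of_right hK hl hycocycle]
  rw [cup_eq_ite]
  split_ifs with hk
  · have hle : l.Pairwise (· ≤ ·) := hsorted.imp le_of_lt
    by_cases hmid : l[k] ∈ σ
    · rw [hxσ _ (hK l hl _ (List.take_subset _ _)) ?_ (by simpa using hk), zero_mul]
      intro a ha
      obtain ⟨i, hi, rfl⟩ := List.mem_take_iff_getElem.1 ha
      exact hσ (hle.rel_get_of_le (a := ⟨i, by omega⟩) (b := ⟨k, hk⟩) (by simp; omega)) hmid
    · rw [hyσ _ (hK l hl _ (List.drop_subset _ _)) ?_, mul_zero]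
      intro a ha haσ
      obtain ⟨i, hi, rfl⟩ := List.mem_drop_iff_getElem.1 ha
      exact hmid (hσ (hle.rel_get_of_le (a := ⟨k, hk⟩) (b := ⟨k + i, by omega⟩) (by simp)) haσ)
  · rfl

lemma IsCoboundaryOn.cup_of_add_coboundary {u v : Cochain ι}
    (hcup : IsCoboundaryOn K (cup (k + 1) (x + coboundary u) (y + coboundary v)))
    (hK : IsComplex K) (hx : IsCocycleOn K (k + 1) x) (hy : y [] = 0)
    (hycocycle : ∀ l ∈ K, coboundary y l = 0) (hv : v [] = 0) :
    IsCoboundaryOn K (cup (k + 1) x y) := by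
  have hsum : cup (k + 1) x y = cup (k + 1) (x + coboundary u) (y + coboundary v) +
      (cup (k + 1) (x + coboundary u) (coboundary v) + cup (k + 1) (coboundary u) y) := by
    simp only [cup_add_left, cup_add_right]
    grind [ZModModule.add_self]
  rw [hsum]
  exact hcup.add (((hx.add_coboundary u).isCoboundaryOn_cup_coboundary hK hv).add
    (isCoboundaryOn_coboundary_cup hK hy hycocycle))

end OnComplex

/-- The `m`-fold cup power of `x`, as a cochain of degree `k`. -/
def cupPow (k : ℕ) (x : Cochain ι) : ℕ → Cochain ι
  | 0 => fun l => if l.length = 1 then 1 else 0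
  | m + 1 => cup k x (cupPow k x m)

lemma cupPow_eq_zero {k : ℕ} {x : Cochain ι} {m : ℕ} {l : List ι} (h : l.length ≠ k * m + 1) :
    cupPow k x m l = 0 := by
  induction m generalizing l with
  | zero => simpa [cupPow] using h
  | succ m ih =>
    rw [cupPow, cup_eq_ite]
    split_ifs with hk
    · rw [ih, mul_zero]
      rw [mul_add_one] at h
      simp only [List.length_drop]
      omega
    · rfl

lemma cupPow_nil (k : ℕ) (x : Cochain ι) (m : ℕ) : cupPow k x m [] = 0 :=
  cupPow_eq_zero (by simp)

lemma IsCocycleOn.coboundary_cupPow {K : Set (List ι)} (hK : IsComplex K) {k : ℕ} {x : Cochain ι}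
    (hx : IsCocycleOn K k x) (m : ℕ) {l : List ι} (hl : l ∈ K) :
    coboundary (cupPow k x m) l = 0 := by
  induction m generalizing l with
  | zero =>
    have hunit : cupPow k x 0 = coboundary fun t => if t = [] then 1 else 0 := by
      ext t
      rcases t with _ | ⟨a, _ | ⟨b, t⟩⟩
      · simp [cupPow, coboundary]
      · simp [cupPow, coboundary]
      · rw [coboundary_congr (y := 0)]
        · simp [cupPow, coboundary_eq_eval_boundaryList, eval]
        · rintro u - hu
          have hu' : u ≠ [] := by
            rintro rfl
            simp at hu
          simp [hu']
    rw [hunit, coboundary_coboundary, Pi.zero_apply]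
  | succ m ih =>
    rw [cupPow, hx.coboundary_cup_eq hK (cupPow_nil k x m) hl,
      cup_eq_zero_of_right hK hl fun t ht => ih ht]

lemma IsCocycleOn.exists_add_coboundary_eq_zero {K : Set (List ι)} {k : ℕ} {x : Cochain ι}
    (hx : IsCocycleOn K k x) {σ : Set ι} (hσK : ∀ l : List ι, (∀ a ∈ l, a ∈ σ) → l ∈ K)
    (hσ : σ.Nonempty) :
    ∃ y : Cochain ι, ∀ l, (∀ a ∈ l, a ∈ σ) → l.length = k + 1 → (x + coboundary y) l = 0 := by
  obtain ⟨v, hv⟩ := hσ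
  refine ⟨fun t => x (v :: t), fun l hl hlen => ?_⟩
  exact hx (v :: l) (hσK _ (by simpa [hv] using hl)) (by simpa using hlen)

lemma IsCoboundaryOn.exists_add_coboundary_eq_zero {K : Set (List ι)} {x : Cochain ι}
    (hx : IsCoboundaryOn K x) : ∃ y : Cochain ι, y [] = 0 ∧ ∀ l ∈ K, (x + coboundary y) l = 0 := by
  obtain ⟨y, hy, hxy⟩ := hx
  exact ⟨y, hy, fun l hl => by simp [hxy l hl, CharTwo.add_self_eq_zero]⟩

lemma isCoboundaryOn_of_card_lt {K : Set (List ι)} (hK : IsComplex K) {d : ℕ} {x : Cochain ι}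
    (hcocycle : ∀ l ∈ K, coboundary x l = 0) (hlen : ∀ l ∈ K, l.length ≠ d → x l = 0)
    (hd : ∀ σ : Finset ι, σ.toList ∈ K → σ.card ≠ d) : IsCoboundaryOn K x := by
  classical
  let : LinearOrder ι := IsWellOrder.linearOrder WellOrderingRel
  refine isCoboundaryOn_of_vanishes_on_sorted hK hcocycle fun l hl hsorted => hlen l hl ?_
  have hnodup : l.Nodup := hsorted.imp ne_of_lt
  rw [← List.toFinset_card_of_nodup hnodup]
  exact hd _ (hK l hl _ fun a ha => by simpa using ha)

/-- The vertex count behind the covering type estimate: remove a simplex with `(k + 1) * m + 1`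
vertices and apply induction to the full subcomplex on the remaining vertices. -/
theorem IsCocycleOn.isCoboundaryOn_cupPow {K : Set (List ι)} (hK : IsComplex K) {k : ℕ}
    {x : Cochain ι} (hx : IsCocycleOn K (k + 1) x) (m : ℕ) {V : Finset ι}
    (hV : ∀ l ∈ K, ∀ a ∈ l, a ∈ V)
    (hcard : V.card < ∑ j ∈ Finset.range (m + 1), ((k + 1) * j + 1)) :
    IsCoboundaryOn K (cupPow (k + 1) x m) := by
  classical
  induction m generalizing K V with
  | zero =>
    refine ⟨0, rfl, fun l hl => ?_⟩
    cases l with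
    | nil => simp [cupPow_nil, coboundary]
    | cons a l =>
      have hV0 : V = ∅ := by simpa using hcard
      simpa [hV0] using hV _ hl a
  | succ m ih =>
    by_cases hσ : ∃ σ : Finset ι, σ.toList ∈ K ∧ σ.card = (k + 1) * (m + 1) + 1
    swap
    · exact isCoboundaryOn_of_card_lt hK (fun l hl => hx.coboundary_cupPow hK _ hl)
        (fun l _ hl => cupPow_eq_zero hl) fun σ hσK hσc => hσ ⟨σ, hσK, hσc⟩
    obtain ⟨σ, hσK, hσc⟩ := hσ
    have hσV : σ ⊆ V := fun a ha => hV _ hσK a (by simpa using ha)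
    set y := cupPow (k + 1) x m
    have hy : y [] = 0 := cupPow_nil _ x m
    have hycocycle (l) (hl : l ∈ K) : coboundary y l = 0 := hx.coboundary_cupPow hK m hl
    let L : Set (List ι) := {l | l ∈ K ∧ ∀ a ∈ l, a ∉ (σ : Set ι)}
    have hyL : IsCoboundaryOn L y := by
      refine ih (V := V \ σ) (fun l hl t ht => ⟨hK l hl.1 t ht, fun a ha => hl.2 a (ht ha)⟩)
        (fun l hl => hx l hl.1)
        (fun l hl a ha => Finset.mem_sdiff.2 ⟨hV l hl.1 a ha, hl.2 a ha⟩) ?_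
      rw [Finset.sum_range_succ] at hcard
      have hle := Finset.card_le_card hσV
      rw [Finset.card_sdiff_of_subset hσV]
      omega
    obtain ⟨τ, hτ, hyτ⟩ := hyL.exists_add_coboundary_eq_zero
    obtain ⟨β, hxβ⟩ := hx.exists_add_coboundary_eq_zero (σ := σ)
      (fun l hl => hK _ hσK l fun a ha => by simpa using hl a ha)
      (Finset.card_pos.1 (by omega))
    have hcup : IsCoboundaryOn K (cup (k + 1) (x + coboundary β) (y + coboundary τ)) := by
      refine isCoboundaryOn_cup_of_vanishes hK (hx.add_coboundary β) (by simp [hy, coboundary])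
        (fun l hl => by simp [coboundary_add, coboundary_coboundary, hycocycle l hl])
        (fun l _ => hxβ l) fun l hl hlσ => hyτ l ⟨hl, hlσ⟩
    exact hcup.cup_of_add_coboundary hK hx hy hycocycle hτ

end Cochain

end CupProduct

section AntipodalTowers

open unitInterval

lemma Chain.map_neg_map_neg {X : Type*} [InvolutiveNeg X] (c : Chain X) :
    (c.map Neg.neg).map Neg.neg = c := by
  rw [map_map]
  exact apply_eq_of_single (f := map _) (g := .id) (by simp) c

variable {X Y : Type*} [PseudoMetricSpace X] [PseudoMetricSpace Y]

/-- The simplices with vertices in `X` and of diameter less than `ε`. -/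
def smallSimplices (X : Type*) [PseudoMetricSpace X] (ε : ℝ) : Set (List X) :=
  {l | ∀ a ∈ l, ∀ b ∈ l, dist a b < ε}

/-- A sequence of mod `2` chains that plays the role of the hemispheres of dimensions `0, …, N`
of a sphere: the boundary of each is the union of the previous one and its antipode. The parameter
`ε` bounds the diameter of their simplices. -/
structure IsAntipodalTower [Neg X] (h : ℕ → Chain X) (N : ℕ) (ε : ℝ) : Prop where
  zero : ∃ p, h 0 = Finsupp.single [p] 1
  boundary_succ : ∀ j < N, (h (j + 1)).boundary = h j + (h j).map Neg.neg
  small : ∀ j ≤ N, h j ∈ Chain.chainsOn (smallSimplices X ε)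

namespace IsAntipodalTower

variable [InvolutiveNeg X] [InvolutiveNeg Y] {h : ℕ → Chain X} {N : ℕ} {δ ε : ℝ}

lemma boundary_add_map_neg (hh : IsAntipodalTower h N ε) :
    (h N + (h N).map Neg.neg).boundary = 0 := by
  cases N with
  | zero =>
    obtain ⟨p, hp⟩ := hh.zero
    simp [hp, Chain.boundaryList, ZModModule.add_self]
  | succ N =>
    rw [map_add, Chain.boundary_map, hh.boundary_succ N N.lt_succ_self, map_add,
      Chain.map_neg_map_neg, add_comm ((h N).map _), ZModModule.add_self]

lemma map (hh : IsAntipodalTower h N δ) {f : X → Y} (hodd : ∀ x, f (-x) = -f x)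
    (hf : ∀ x y, dist x y < δ → dist (f x) (f y) < ε) :
    IsAntipodalTower (fun j => (h j).map f) N ε where
  zero := by
    obtain ⟨p, hp⟩ := hh.zero
    exact ⟨f p, by simp [hp]⟩
  boundary_succ j hj := by
    rw [Chain.boundary_map, hh.boundary_succ j hj, map_add, Chain.map_map, Chain.map_map]
    congr 3
    exact funext hodd
  small j hj := by
    refine Chain.map_mem_chainsOn (fun l hl => ?_) (hh.small j hj)
    simpa [smallSimplices] using fun a ha b hb => hf a b (hl a ha b hb)

lemma update (hh : IsAntipodalTower h N ε) {c : Chain X}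
    (hc : c.boundary = h N + (h N).map Neg.neg) (hcε : c ∈ Chain.chainsOn (smallSimplices X ε)) :
    IsAntipodalTower (Function.update h (N + 1) c) (N + 1) ε where
  zero := by simpa using hh.zero
  boundary_succ j hj := by
    rcases Nat.lt_succ_iff_lt_or_eq.1 hj with hj | rfl
    · have hjN : j ≠ N + 1 := by omega
      simpa [hj.ne, hjN] using hh.boundary_succ j hj
    · simpa using hc
  small j hj := by
    rcases Nat.le_succ_iff.1 hj with hj | rfl
    · have hjN : j ≠ N + 1 := by omega
      simpa [hjN] using hh.small j hj
    · simpa using hcε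

lemma sum_range_add_succ {A : Type*} [AddCommGroup A] [Module (ZMod 2) A] (u : ℕ → A) (n : ℕ) :
    ∑ j ∈ Finset.range n, (u j + u (j + 1)) = u 0 + u n := by
  simp only [add_comm (u _) (u (_ + 1)), ← ZModModule.sub_eq_add]
  rw [Finset.sum_range_sub, ZModModule.sub_eq_add, ZModModule.sub_eq_add, add_comm]

/-- The new chain is a subdivided cone over the boundary sphere `h N + map Neg.neg (h N)`. -/
lemma exists_succ (hh : IsAntipodalTower h N δ) (hneg : Isometry (Neg.neg : X → X))
    {f : ℕ → X → Y} {n : ℕ} (hodd : ∀ x, f 0 (-x) = -f 0 x) (hconst : ∀ x y, f n x = f n y)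
    (hf : ∀ i j, i ≤ j + 1 → j ≤ i + 1 → ∀ x y, dist x y < δ → dist (f i x) (f j y) < ε) :
    ∃ h' : ℕ → Chain Y, IsAntipodalTower h' (N + 1) ε := by
  let z := h N + (h N).map Neg.neg
  have hz : z ∈ Chain.chainsOn (smallSimplices X δ) := by
    refine add_mem (hh.small N le_rfl) (Chain.map_mem_chainsOn (fun l hl => ?_)
      (hh.small N le_rfl))
    simp only [smallSimplices, mem_ofPred_eq, List.forall_mem_map, hneg.dist_eq]
    exact hl
  have hboundary (j : ℕ) :
      (Chain.prism (f j) (f (j + 1)) z).boundary = z.map (f j) + z.map (f (j + 1)) := by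
    rw [Chain.boundary_prism, hh.boundary_add_map_neg, map_zero, zero_add]
  have hend : z.map (f n) = 0 := by
    rw [map_add, Chain.map_map, show f n ∘ Neg.neg = f n from funext fun x => hconst _ _,
      ZModModule.add_self]
  refine ⟨_, (hh.map hodd (hf 0 0 (by simp) (by simp))).update
    (c := ∑ j ∈ Finset.range n, Chain.prism (f j) (f (j + 1)) z) ?_ ?_⟩
  · rw [map_sum, Finset.sum_congr rfl fun j _ => hboundary j, sum_range_add_succ
      fun j => z.map (f j), hend, add_zero, map_add, Chain.map_map, Chain.map_map]
    congr 3
    exact funext hodd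
  · refine sum_mem fun j _ => Chain.prism_mem_chainsOn (fun l hl t ht _ a ha b hb => ?_) hz
    obtain ⟨x, hx, hax⟩ := ht a ha
    obtain ⟨y, hy, hby⟩ := ht b hb
    have hxy := hl x hx y hy
    rcases hax with rfl | rfl <;> rcases hby with rfl | rfl <;>
      exact hf _ _ (by omega) (by omega) x y hxy

end IsAntipodalTower

/-- The unit sphere of `ℝ^{N + 1}` with the `ℓ¹` norm, on which the join with a point is given by
affine formulas. -/
abbrev L1Sphere (N : ℕ) : Type :=
  Metric.sphere (0 : PiLp 1 fun _ : Fin (N + 1) => ℝ) 1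

namespace L1Sphere

variable {N : ℕ}

lemma norm_toLp_cons (s : ℝ) (v : Fin N → ℝ) :
    ‖(WithLp.toLp 1 (Fin.cons s v : Fin (N + 1) → ℝ) : PiLp 1 fun _ => ℝ)‖ =
      |s| + ‖(WithLp.toLp 1 v : PiLp 1 fun _ => ℝ)‖ := by
  simp [PiLp.norm_eq_of_L1, Fin.sum_univ_succ]

lemma cons_sub_cons (s t : ℝ) (v w : Fin N → ℝ) :
    (Fin.cons s v - Fin.cons t w : Fin (N + 1) → ℝ) = Fin.cons (s - t) (v - w) := by
  ext i
  cases i using Fin.cases <;> simp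

lemma isometry_neg : Isometry (Neg.neg : L1Sphere N → L1Sphere N) :=
  Isometry.of_dist_eq fun x y => dist_neg_neg x.1 y.1

/-- The point at height `s` on the segment from `x`, on the equator, to the pole. -/
noncomputable def suspend (s : I) (x : L1Sphere N) : L1Sphere (N + 1) :=
  ⟨WithLp.toLp 1 (Fin.cons (s : ℝ) ((1 - s : ℝ) • x.1.ofLp)), by
    have hx : ‖x.1‖ = 1 := mem_sphere_zero_iff_norm.1 x.2
    rw [mem_sphere_zero_iff_norm, norm_toLp_cons, WithLp.toLp_smul, norm_smul, WithLp.toLp_ofLp, hx,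
      Real.norm_of_nonneg (unitInterval.one_minus_nonneg s), abs_of_nonneg (unitInterval.nonneg s)]
    ring⟩

lemma suspend_zero_neg (x : L1Sphere N) : suspend 0 (-x) = -suspend 0 x := by
  ext i
  cases i using Fin.cases <;> simp [suspend]

lemma suspend_one (x y : L1Sphere N) : suspend 1 x = suspend 1 y := by
  simp [suspend]

lemma dist_suspend_le (s t : I) (x y : L1Sphere N) :
    dist (suspend s x) (suspend t y) ≤ dist x y + 2 * |(s - t : ℝ)| := by
  have hy : ‖y.1‖ = 1 := mem_sphere_zero_iff_norm.1 y.2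
  have hsub : (1 - s : ℝ) • x.1 - (1 - t : ℝ) • y.1 =
      (1 - s : ℝ) • (x.1 - y.1) + (t - s : ℝ) • y.1 := by
    module
  have hequator : ‖(1 - s : ℝ) • x.1 - (1 - t : ℝ) • y.1‖ ≤ dist x y + |(s - t : ℝ)| :=
    calc ‖(1 - s : ℝ) • x.1 - (1 - t : ℝ) • y.1‖
        ≤ ‖(1 - s : ℝ) • (x.1 - y.1)‖ + ‖(t - s : ℝ) • y.1‖ := hsub ▸ norm_add_le _ _
      _ = (1 - s) * dist x y + |(s - t : ℝ)| := by
          rw [norm_smul, norm_smul, hy, Real.norm_of_nonneg (unitInterval.one_minus_nonneg s),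
            Subtype.dist_eq, dist_eq_norm, Real.norm_eq_abs, abs_sub_comm, mul_one]
      _ ≤ dist x y + |(s - t : ℝ)| := by
          gcongr
          exact mul_le_of_le_one_left dist_nonneg (by linarith [unitInterval.nonneg s])
  have hdist : dist (suspend s x) (suspend t y) =
      |(s - t : ℝ)| + ‖(1 - s : ℝ) • x.1 - (1 - t : ℝ) • y.1‖ := by
    rw [Subtype.dist_eq, dist_eq_norm, suspend, suspend, ← WithLp.toLp_sub, cons_sub_cons,
      norm_toLp_cons]
    rfl
  linarith

theorem exists_isAntipodalTower (N : ℕ) {ε : ℝ} (hε : 0 < ε) :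
    ∃ h : ℕ → Chain (L1Sphere N), IsAntipodalTower h N ε := by
  induction N generalizing ε with
  | zero =>
    obtain ⟨p⟩ : Nonempty (L1Sphere 0) :=
      (NormedSpace.sphere_nonempty.2 zero_le_one).to_subtype
    refine ⟨fun _ => Finsupp.single [p] 1, ⟨p, rfl⟩, by simp, fun j _ => ?_⟩
    refine Chain.single_mem_chainsOn (fun a ha b hb => ?_) 1
    rwa [List.mem_singleton.1 ha, List.mem_singleton.1 hb, dist_self]
  | succ N ih =>
    obtain ⟨h, hh⟩ := ih (half_pos hε)
    obtain ⟨n, hn⟩ := exists_nat_gt (4 / ε)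
    have hn0 : (0 : ℝ) < n := (by positivity : 0 < 4 / ε).trans hn
    let height (j : ℕ) : I := projIcc 0 1 zero_le_one (j / n : ℝ)
    have hheight {i j : ℕ} (hij : i ≤ j + 1) (hji : j ≤ i + 1) :
        2 * |(height i - height j : ℝ)| < ε / 2 := by
      have hle : |(i - j : ℝ)| ≤ 1 := by
        rw [abs_sub_le_iff, sub_le_iff_le_add', sub_le_iff_le_add']
        constructor <;> norm_cast
      calc 2 * |(height i - height j : ℝ)|
          ≤ 2 * |(i / n - j / n : ℝ)| :=
            mul_le_mul_of_nonneg_left (abs_projIcc_sub_projIcc _) two_pos.le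
        _ = 2 * (|(i - j : ℝ)| / n) := by rw [← sub_div, abs_div, abs_of_pos hn0]
        _ ≤ 2 * (1 / n) := by gcongr
        _ < ε / 2 := by
          rw [div_lt_iff₀ hε] at hn
          rw [← mul_div_assoc, div_lt_div_iff₀ hn0 two_pos]
          linarith
    refine hh.exists_succ isometry_neg (f := fun j => suspend (height j)) (n := n) ?_ ?_ ?_
    · simpa [height] using suspend_zero_neg
    · simpa [height, hn0.ne'] using suspend_one
    · intro i j hij hji x y hxy
      linarith [dist_suspend_le (height i) (height j) x y, hheight hij hji]

end L1Sphere

end AntipodalTowers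

section Descent

namespace Cochain

variable {α β : Type*}

lemma cup_map (k : ℕ) (x y : Cochain β) (f : α → β) (l : List α) :
    cup k x y (l.map f) = cup k (fun t => x (t.map f)) (fun t => y (t.map f)) l := by
  simp [cup_eq_ite, List.map_take, List.map_drop]

lemma cupPow_map (k : ℕ) (x : Cochain β) (m : ℕ) (f : α → β) (l : List α) :
    cupPow k x m (l.map f) = cupPow k (fun t => x (t.map f)) m l := by
  induction m generalizing l with
  | zero => simp [cupPow]
  | succ m ih => rw [cupPow, cup_map, cupPow, funext ih]

lemma cup_congr_left {K : Set (List α)} (hK : IsComplex K) {k : ℕ} {x x' y : Cochain α}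
    (hx : ∀ t ∈ K, t.length = k + 1 → x t = x' t) {l : List α} (hl : l ∈ K) :
    cup k x y l = cup k x' y l := by
  simp only [cup_eq_ite]
  split_ifs with hk
  · rw [hx _ (hK l hl _ (List.take_subset _ _)) (by simpa using hk)]
  · rfl

end Cochain

open Cochain

variable {X : Type*} [PseudoMetricSpace X] {ε : ℝ}

lemma isComplex_smallSimplices : IsComplex (smallSimplices X ε) :=
  fun _ hl _ ht a ha b hb => hl a (ht ha) b (ht hb)

namespace IsAntipodalTower

variable [Neg X] {h : ℕ → Chain X} {N : ℕ}

lemma eval_boundary_eq_zero (hh : IsAntipodalTower h N ε) {y : Cochain X} (hy : y [] = 0)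
    (heven : ∀ l, y (l.map Neg.neg) = y l) {j : ℕ} (hj : j ≤ N) :
    eval y (h j).boundary = 0 := by
  cases j with
  | zero =>
    obtain ⟨p, hp⟩ := hh.zero
    simp [hp, Chain.boundaryList, hy]
  | succ j =>
    rw [hh.boundary_succ j hj, map_add, eval_map, funext heven, CharTwo.add_self_eq_zero]

lemma eval_cup_succ (hh : IsAntipodalTower h N ε) {k : ℕ} {x z y : Cochain X} (hy : y [] = 0)
    (heven : ∀ l, y (l.map Neg.neg) = y l)
    (hycocycle : ∀ l ∈ smallSimplices X ε, coboundary y l = 0)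
    (hxz : ∀ l ∈ smallSimplices X ε, l.length = k + 2 → x l = coboundary z l)
    {j : ℕ} (hj : j < N) :
    eval (cup (k + 1) x y) (h (j + 1)) =
      eval (cup k (z + fun l => z (l.map Neg.neg)) y) (h j) := by
  calc eval (cup (k + 1) x y) (h (j + 1))
      = eval (coboundary (cup k z y)) (h (j + 1)) :=
        eval_congr (fun l hl => by
          rw [coboundary_cup k z hy, Pi.add_apply,
            cup_eq_zero_of_right isComplex_smallSimplices hl hycocycle, add_zero,
            cup_congr_left isComplex_smallSimplices hxz hl]) (hh.small _ hj)
    _ = eval (cup k z y) (h j) + eval (fun l => cup k z y (l.map Neg.neg)) (h j) := by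
        rw [eval_coboundary, hh.boundary_succ j hj, map_add, eval_map]
    _ = eval (cup k (z + fun l => z (l.map Neg.neg)) y) (h j) := by
        rw [cup_add_left, funext fun l => cup_map k z y Neg.neg l, funext heven]
        simp [eval, Finsupp.linearCombination_apply, Finsupp.sum, mul_add, Finset.sum_add_distrib]

/-- The mod `2` analogue of the computation of the cup powers of the Euler class of `S^N / ±1`:
each factor `n` lowers the dimension by two, through the transgressions `b` and `e`. -/
theorem eval_cupPow_eq_one (hh : IsAntipodalTower h N ε) {n b e : Cochain X}
    (heven : ∀ l, n (l.map Neg.neg) = n l)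
    (hb : ∀ l ∈ smallSimplices X ε, l.length = 3 → n l = coboundary b l)
    (he : ∀ l ∈ smallSimplices X ε, l.length = 2 → b l + b (l.map Neg.neg) = coboundary e l)
    (hone : ∀ p, e [p] + e [-p] = 1) {m : ℕ} (hm : 2 * m ≤ N) :
    eval (cupPow 2 n m) (h (2 * m)) = 1 := by
  have hcocycle : IsCocycleOn (smallSimplices X ε) 2 n := fun l hl hlen => by
    rw [coboundary_congr (y := coboundary b), coboundary_coboundary, Pi.zero_apply]
    exact fun t ht htl => hb t (isComplex_smallSimplices l hl t ht.subset) (by omega)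
  induction m with
  | zero =>
    obtain ⟨p, hp⟩ := hh.zero
    simp [hp, cupPow]
  | succ m ih =>
    have hy := cupPow_nil 2 n m
    have hyeven (l : List X) : cupPow 2 n m (l.map Neg.neg) = cupPow 2 n m l := by
      rw [cupPow_map, funext heven]
    have hycocycle (l) (hl : l ∈ smallSimplices X ε) : coboundary (cupPow 2 n m) l = 0 :=
      hcocycle.coboundary_cupPow isComplex_smallSimplices m hl
    have hm' : 2 * m < N := by omega
    have hstep_b := hh.eval_cup_succ (k := 1) hy hyeven hycocycle hb hm
    have hstep_e := hh.eval_cup_succ (k := 0) (x := b + fun l : List X => b (l.map Neg.neg))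
      (z := e) hy hyeven hycocycle he hm'
    have hunit : cup 0 (e + fun l : List X => e (l.map Neg.neg)) (cupPow 2 n m) =
        cupPow 2 n m := by
      ext l
      cases l with
      | nil => simp [hy]
      | cons p l => simp [cup, hone]
    rw [hunit, ih hm'.le] at hstep_e
    exact hstep_b.trans hstep_e

end IsAntipodalTower

/-- An even simplicial approximation `index` of a map from `X`, at scale `ε`, to the complex `K`,
along which the `2`-cocycle `n` of `K` transgresses, through the `1`-cochain `jump` and the
`0`-cochain `flip` of `X`, to the generator of the cohomology of the group `±1`. -/
structure Transgression (X : Type*) [PseudoMetricSpace X] [Neg X] {ι : Type*} (K : Set (List ι))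
    (n : Cochain ι) (ε : ℝ) where
  index : X → ι
  jump : Cochain X
  flip : Cochain X
  index_neg (x : X) : index (-x) = index x
  map_index_mem (l) : l ∈ smallSimplices X ε → l.map index ∈ K
  apply_map_index (l) : l ∈ smallSimplices X ε → l.length = 3 →
    n (l.map index) = coboundary jump l
  jump_add_jump_neg (l) : l ∈ smallSimplices X ε → l.length = 2 →
    jump l + jump (l.map Neg.neg) = coboundary flip l
  flip_add_flip_neg (x) : flip [x] + flip [-x] = 1

lemma Transgression.not_isCoboundaryOn_cupPow [Neg X] {ι : Type*} {K : Set (List ι)}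
    {n : Cochain ι} (t : Transgression X K n ε) {h : ℕ → Chain X} {N m : ℕ}
    (hh : IsAntipodalTower h N ε) (hm : 2 * m ≤ N) : ¬ IsCoboundaryOn K (cupPow 2 n m) := by
  rintro ⟨y, hy, hcob⟩
  have heven (x : Cochain ι) (l : List X) :
      x ((l.map Neg.neg).map t.index) = x (l.map t.index) := by
    rw [List.map_map, show t.index ∘ Neg.neg = t.index from funext t.index_neg]
  have heval : eval (cupPow 2 (fun l => n (l.map t.index)) m) (h (2 * m)) =
      eval (coboundary fun l => y (l.map t.index)) (h (2 * m)) :=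
    eval_congr (fun l hl => by
      rw [← cupPow_map, coboundary_map, hcob _ (t.map_index_mem l hl)]) (hh.small _ hm)
  rw [hh.eval_cupPow_eq_one (heven n) t.apply_map_index t.jump_add_jump_neg t.flip_add_flip_neg hm,
    eval_coboundary, hh.eval_boundary_eq_zero hy (heven y) hm] at heval
  exact one_ne_zero heval

end Descent

section CechCocycles

variable {ι X Y : Type*}

/-- The nerve of a family of sets, as a complex of lists. -/
def nerve (U : ι → Set Y) : Set (List ι) :=
  {l | ∃ y, ∀ i ∈ l, y ∈ U i}

lemma isComplex_nerve (U : ι → Set Y) : Cochain.IsComplex (nerve U) :=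
  fun _ ⟨y, hy⟩ _ ht => ⟨y, fun i hi => hy i (ht hi)⟩

lemma eq_of_intCast_mul_two_pi_I_eq {k l : ℤ}
    (h : (k : ℂ) * (2 * Real.pi * Complex.I) = l * (2 * Real.pi * Complex.I)) : k = l :=
  Int.cast_injective (mul_right_cancel₀ Complex.two_pi_I_ne_zero h)

lemma eq_zero_of_norm_intCast_mul_two_pi_I_lt {k : ℤ}
    (h : ‖(k : ℂ) * (2 * Real.pi * Complex.I)‖ < 4) : k = 0 := by
  by_contra hk
  have hone : (1 : ℝ) ≤ |(k : ℝ)| := by exact_mod_cast Int.one_le_abs hk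
  have hnorm : ‖(k : ℂ) * (2 * Real.pi * Complex.I)‖ = |(k : ℝ)| * (2 * Real.pi) := by
    simp [abs_of_pos Real.pi_pos]
  nlinarith [Real.pi_gt_three]

lemma exists_even_index_ball_subset [PseudoMetricSpace X] [CompactSpace X] [InvolutiveNeg X]
    (hneg : Isometry (Neg.neg : X → X)) {A : ι → Set X} (hA : ∀ i, IsOpen (A i))
    (hcover : ⋃ i, A i = univ) (hAneg : ∀ i x, x ∈ A i → -x ∈ A i) :
    ∃ index : X → ι, (∀ x, index (-x) = index x) ∧
      ∃ r > 0, ∀ x, Metric.ball x r ⊆ A (index x) := by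
  obtain ⟨r, hr, hball⟩ := lebesgue_number_lemma_of_metric isCompact_univ hA hcover.ge
  let good (x : X) : Set ι := {i | Metric.ball x r ⊆ A i}
  have hgood_subset (x : X) : good x ⊆ good (-x) := by
    intro i (hi : Metric.ball x r ⊆ A i)
    change Metric.ball (-x) r ⊆ A i
    intro y hy
    simpa using hAneg i (-y) (hi (by simpa [← hneg.dist_eq (-y) x] using hy))
  have hgood_neg (x : X) : good (-x) = good x :=
    Subset.antisymm (by simpa using hgood_subset (-x)) (hgood_subset x)
  choose pick hpick using fun s : {s : Set ι // s.Nonempty} => s.2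
  refine ⟨fun x => pick ⟨good x, hball x trivial⟩, fun x => ?_, r, hr, fun x => ?_⟩
  · exact congrArg pick (Subtype.ext (hgood_neg x))
  · exact hpick ⟨good x, hball x trivial⟩

lemma exists_even_index_isClosed [PseudoMetricSpace X] [CompactSpace X] [InvolutiveNeg X]
    (hneg : Isometry (Neg.neg : X → X)) {A : ι → Set X} (hA : ∀ i, IsOpen (A i))
    (hcover : ⋃ i, A i = univ) (hAneg : ∀ i x, x ∈ A i → -x ∈ A i) :
    ∃ (index : X → ι) (K : ι → Set X), (∀ x, index (-x) = index x) ∧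
      (∀ i, IsClosed (K i) ∧ K i ⊆ A i) ∧ ∃ r > 0, ∀ x, Metric.ball x r ⊆ K (index x) := by
  obtain ⟨index, hindex, r, hr, hball⟩ := exists_even_index_ball_subset hneg hA hcover hAneg
  refine ⟨index, fun i => (Metric.thickening (r / 2) (A i)ᶜ)ᶜ, hindex, fun i => ⟨?_, ?_⟩, r / 2,
    half_pos hr, fun x y hy hthick => ?_⟩
  · exact Metric.isOpen_thickening.isClosed_compl
  · exact compl_subset_comm.1 (Metric.self_subset_thickening (half_pos hr) _)
  · obtain ⟨z, hz, hyz⟩ := Metric.mem_thickening_iff.1 hthick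
    refine hz (hball x ?_)
    have htriangle := dist_triangle_left z x y
    rw [Metric.mem_ball] at hy ⊢
    linarith

lemma eventually_uniformity_norm_lt {E : Type*} [SeminormedAddGroup E] [UniformSpace X]
    [CompactSpace X] {K : Set X} (hK : IsClosed K) {F : X × X → E}
    (hF : ∀ x ∈ K, ContinuousAt F (x, x)) (hzero : ∀ x ∈ K, F (x, x) = 0) {δ : ℝ} (hδ : 0 < δ) :
    ∀ᶠ p in 𝓤 X, p.1 ∈ K → ‖F p‖ < δ := by
  rw [← nhdsSet_diagonal_eq_uniformity, eventually_nhdsSet_iff_forall]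
  rintro ⟨x, y⟩ (rfl : x = y)
  by_cases hx : x ∈ K
  · have hlt : ∀ᶠ p in 𝓝 (x, x), ‖F p‖ < δ :=
      (hF x hx).norm.eventually_lt_const (by simpa [hzero x hx] using hδ)
    exact hlt.mono fun p hp _ => hp
  · have hcompl : ∀ᶠ p : X × X in 𝓝 (x, x), p.1 ∈ Kᶜ :=
      continuousAt_fst.eventually (hK.isOpen_compl.mem_nhds hx)
    exact hcompl.mono fun p hp h => absurd h hp

variable [TopologicalSpace Y]

/-- Logarithms of the transition functions of a complex line bundle with respect to trivializations
over the members of `U`, together with the integral Čech cocycle that represents its Chern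
class. -/
structure LogCocycle (U : ι → Set Y) where
  angle : ι → ι → Y → ℂ
  index : ι → ι → ι → ℤ
  continuousOn_angle (i j : ι) : ContinuousOn (angle i j) (U i ∩ U j)
  angle_add_angle_sub {i j k : ι} {y : Y} : y ∈ U i → y ∈ U j → y ∈ U k →
    angle i j y + angle j k y - angle i k y = index i j k * (2 * Real.pi * Complex.I)

namespace LogCocycle

variable {U : ι → Set Y} (θ : LogCocycle U)

/-- The reduction mod `2` of the Chern class, as a simplicial cochain of the nerve. -/
def chernMod2 : Cochain ι
  | [i, j, k] => θ.index i j k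
  | _ => 0

lemma index_cocycle {i j k l : ι} {y : Y} (hi : y ∈ U i) (hj : y ∈ U j) (hk : y ∈ U k)
    (hl : y ∈ U l) :
    θ.index j k l - θ.index i k l + θ.index i j l - θ.index i j k = 0 := by
  apply eq_of_intCast_mul_two_pi_I_eq
  push_cast
  linear_combination -θ.angle_add_angle_sub hj hk hl + θ.angle_add_angle_sub hi hk hl -
    θ.angle_add_angle_sub hi hj hl + θ.angle_add_angle_sub hi hj hk

lemma isCocycleOn_chernMod2 : Cochain.IsCocycleOn (nerve U) 2 θ.chernMod2 := by
  rintro l ⟨y, hy⟩ hlen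
  obtain ⟨i, j, k, l, rfl⟩ : ∃ i j k m, [i, j, k, m] = l := by
    simpa [List.length_eq_succ_iff] using hlen
  have hcocycle := congrArg (Int.cast : ℤ → ZMod 2) (θ.index_cocycle (hy i (by simp))
    (hy j (by simp)) (hy k (by simp)) (hy l (by simp)))
  push_cast at hcocycle
  simp only [Cochain.coboundary, chernMod2]
  grind [ZModModule.sub_eq_add, ZModModule.add_self]

end LogCocycle

/-- An odd nowhere vanishing section, over a space with an involution, of the pullback along an even
map `φ` of the line bundle described by `θ`. -/
structure OddSection [TopologicalSpace X] [Neg X] {U : ι → Set Y} (θ : LogCocycle U)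
    (φ : C(X, Y)) where
  coord : ι → X → ℂ
  map_neg (x : X) : φ (-x) = φ x
  continuousOn_coord (i : ι) : ContinuousOn (coord i) (φ ⁻¹' U i)
  coord_ne_zero {i : ι} {x : X} : φ x ∈ U i → coord i x ≠ 0
  coord_neg {i : ι} {x : X} : φ x ∈ U i → coord i (-x) = -coord i x
  coord_eq {i j : ι} {x : X} : φ x ∈ U i → φ x ∈ U j →
    coord j x = coord i x * Complex.exp (θ.angle i j (φ x))

namespace OddSection

section Relations

variable [TopologicalSpace X] [Neg X] {U : ι → Set Y} {θ : LogCocycle U} {φ : C(X, Y)}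
  (σ : OddSection θ φ) (index : X → ι)

/-- The logarithm of the coordinate of the section at `x` in the trivialization chosen at `x`. -/
noncomputable def logCoord (x : X) : ℂ :=
  Complex.log (σ.coord (index x) x)

/-- The variation from `x` to `y` of the logarithm of the section in the trivialization chosen
at `x`. -/
noncomputable def drift (x y : X) : ℂ :=
  Complex.log (σ.coord (index x) y / σ.coord (index x) x)

/-- `b` counts the full turns between the logarithms of the section chosen at `x` and at `y`. -/
def IsJump (x y : X) (b : ℤ) : Prop :=
  σ.logCoord index y - σ.logCoord index x - θ.angle (index x) (index y) (φ y) -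
    σ.drift index x y = b * (2 * Real.pi * Complex.I)

/-- `e` counts the full turns between the logarithms of the section chosen at `-x` and at `x`, in
addition to the half turn due to oddness. -/
def IsFlip (x : X) (e : ℤ) : Prop :=
  σ.logCoord index (-x) - σ.logCoord index x - Real.pi * Complex.I = e * (2 * Real.pi * Complex.I)

variable {index}

lemma exp_logCoord {x : X} (hx : φ x ∈ U (index x)) :
    Complex.exp (σ.logCoord index x) = σ.coord (index x) x :=
  Complex.exp_log (σ.coord_ne_zero hx)

lemma exists_isJump {x y : X} (hx : φ x ∈ U (index x)) (hy : φ y ∈ U (index y))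
    (hxy : φ y ∈ U (index x)) : ∃ b, σ.IsJump index x y b := by
  have hdrift : Complex.exp (σ.drift index x y) = σ.coord (index x) y / σ.coord (index x) x :=
    Complex.exp_log (div_ne_zero (σ.coord_ne_zero hxy) (σ.coord_ne_zero hx))
  have hcoord := σ.coord_ne_zero hx
  have hcoord' := σ.coord_ne_zero hxy
  have hexp := Complex.exp_ne_zero (θ.angle (index x) (index y) (φ y))
  apply Complex.exp_eq_one_iff.1
  rw [Complex.exp_sub, Complex.exp_sub, Complex.exp_sub, σ.exp_logCoord hx, σ.exp_logCoord hy,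
    hdrift, σ.coord_eq hxy hy]
  field_simp

lemma exists_isFlip (hindex : ∀ x, index (-x) = index x) {x : X} (hx : φ x ∈ U (index x)) :
    ∃ e, σ.IsFlip index x e := by
  have hcoord := σ.coord_ne_zero hx
  apply Complex.exp_eq_one_iff.1
  rw [Complex.exp_sub, Complex.exp_sub, σ.exp_logCoord hx,
    σ.exp_logCoord (by rwa [hindex, σ.map_neg]), hindex, σ.coord_neg hx, Complex.exp_pi_mul_I]
  field_simp

variable {σ}

lemma IsJump.add_sub_add_index_eq_zero {x y z : X} {b b' b'' : ℤ} (hb : σ.IsJump index x y b)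
    (hb' : σ.IsJump index y z b') (hb'' : σ.IsJump index x z b'') (hx : φ z ∈ U (index x))
    (hy : φ z ∈ U (index y)) (hz : φ z ∈ U (index z)) (hxy : ‖σ.drift index x y‖ < 1)
    (hyz : ‖σ.drift index y z‖ < 1) (hxz : ‖σ.drift index x z‖ < 1)
    (hangle : ‖θ.angle (index x) (index y) (φ z) - θ.angle (index x) (index y) (φ y)‖ < 1) :
    b + b' - b'' + θ.index (index x) (index y) (index z) = 0 := by
  apply eq_zero_of_norm_intCast_mul_two_pi_I_lt
  have hsum : ((b + b' - b'' + θ.index (index x) (index y) (index z) : ℤ) : ℂ) *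
      (2 * Real.pi * Complex.I) =
      (θ.angle (index x) (index y) (φ z) - θ.angle (index x) (index y) (φ y)) +
        (σ.drift index x z - σ.drift index x y - σ.drift index y z) := by
    unfold IsJump at hb hb' hb''
    push_cast
    linear_combination -hb - hb' + hb'' - θ.angle_add_angle_sub hx hy hz
  rw [hsum]
  have hadd := norm_add_le (θ.angle (index x) (index y) (φ z) - θ.angle (index x) (index y) (φ y))
    (σ.drift index x z - σ.drift index x y - σ.drift index y z)
  have hsub := norm_sub_le (σ.drift index x z - σ.drift index x y) (σ.drift index y z)
  have hsub' := norm_sub_le (σ.drift index x z) (σ.drift index x y)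
  linarith

lemma IsJump.neg_sub_eq (hindex : ∀ x, index (-x) = index x) {x y : X} {b b' e e' : ℤ}
    (hb : σ.IsJump index x y b) (hb' : σ.IsJump index (-x) (-y) b') (he : σ.IsFlip index x e)
    (he' : σ.IsFlip index y e') (hx : φ x ∈ U (index x)) (hxy : φ y ∈ U (index x)) :
    b' - b = e' - e := by
  have hdrift : σ.drift index (-x) (-y) = σ.drift index x y := by
    rw [drift, hindex, σ.coord_neg hx, σ.coord_neg hxy, neg_div_neg_eq, drift]
  rw [IsJump, hdrift, hindex, hindex, σ.map_neg] at hb'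
  unfold IsJump at hb
  unfold IsFlip at he he'
  apply eq_of_intCast_mul_two_pi_I_eq
  push_cast
  linear_combination hb - hb' + he' - he

end Relations

section InvolutiveNeg

variable [TopologicalSpace X] [InvolutiveNeg X] {U : ι → Set Y} {θ : LogCocycle U} {φ : C(X, Y)}
  {σ : OddSection θ φ} {index : X → ι}

lemma IsFlip.add_eq_neg_one {x : X} {e e' : ℤ} (he : σ.IsFlip index x e)
    (he' : σ.IsFlip index (-x) e') : e + e' = -1 := by
  unfold IsFlip at he he'
  rw [neg_neg] at he'
  apply eq_of_intCast_mul_two_pi_I_eq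
  push_cast
  linear_combination -he - he'

end InvolutiveNeg

/-- An even choice of trivializations along which the section and the transition functions vary by
less than a full turn at scale `ε`. -/
structure FineIndex [PseudoMetricSpace X] [Neg X] {U : ι → Set Y} {θ : LogCocycle U} {φ : C(X, Y)}
    (σ : OddSection θ φ) (ε : ℝ) where
  index : X → ι
  index_neg (x : X) : index (-x) = index x
  mem {x y : X} : dist x y < ε → φ y ∈ U (index x)
  norm_drift_lt {x y : X} : dist x y < ε → ‖σ.drift index x y‖ < 1
  norm_angle_sub_lt {x y z : X} : dist x y < ε → dist y z < ε →
    ‖θ.angle (index x) (index y) (φ z) - θ.angle (index x) (index y) (φ y)‖ < 1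

lemma FineIndex.nonempty_transgression [PseudoMetricSpace X] [InvolutiveNeg X] [Nonempty X]
    {U : ι → Set Y} {θ : LogCocycle U} {φ : C(X, Y)} {σ : OddSection θ φ} {ε : ℝ}
    (F : σ.FineIndex ε) (hneg : Isometry (Neg.neg : X → X)) (hε : 0 < ε) :
    Nonempty (Transgression X (nerve U) θ.chernMod2 ε) := by
  have hself (x : X) : φ x ∈ U (F.index x) := F.mem (by simpa using hε)
  have hjump (x y : X) : ∃ b, dist x y < ε → σ.IsJump F.index x y b := by
    by_cases h : dist x y < ε
    · obtain ⟨b, hb⟩ := σ.exists_isJump (hself x) (hself y) (F.mem h)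
      exact ⟨b, fun _ => hb⟩
    · exact ⟨0, fun h' => absurd h' h⟩
  choose b hb using hjump
  choose e he using fun x => σ.exists_isFlip F.index_neg (hself x)
  refine ⟨⟨F.index, fun | [x, y] => b x y | _ => 0, fun | [x] => e x | _ => 0, F.index_neg,
    fun l hl => ?_, fun l hl hlen => ?_, fun l hl hlen => ?_, fun x => ?_⟩⟩
  · cases l with
    | nil => exact ⟨φ (Classical.arbitrary X), by simp⟩
    | cons x l =>
      have hmem (y) (hy : y ∈ x :: l) : φ x ∈ U (F.index y) := F.mem (hl y hy x (by simp))
      exact ⟨φ x, by simpa using hmem⟩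
  · obtain ⟨x, y, z, rfl⟩ := List.length_eq_three.1 hlen
    have hxy := hl x (by simp) y (by simp)
    have hyz := hl y (by simp) z (by simp)
    have hxz := hl x (by simp) z (by simp)
    have h := congrArg (Int.cast : ℤ → ZMod 2) ((hb x y hxy).add_sub_add_index_eq_zero
      (hb y z hyz) (hb x z hxz) (F.mem hxz) (F.mem hyz) (hself z) (F.norm_drift_lt hxy)
      (F.norm_drift_lt hyz) (F.norm_drift_lt hxz) (F.norm_angle_sub_lt hxy hyz))
    push_cast at h
    simp only [Cochain.coboundary, LogCocycle.chernMod2, List.map]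
    grind [ZModModule.sub_eq_add, ZModModule.add_self]
  · obtain ⟨x, y, rfl⟩ := List.length_eq_two.1 hlen
    have hxy := hl x (by simp) y (by simp)
    have h := congrArg (Int.cast : ℤ → ZMod 2) ((hb x y hxy).neg_sub_eq F.index_neg
      (hb (-x) (-y) (hneg.dist_eq x y ▸ hxy)) (he x) (he y) (hself x) (F.mem hxy))
    push_cast at h
    simp only [Cochain.coboundary, List.map]
    grind [ZModModule.sub_eq_add, ZModModule.add_self]
  · have h := congrArg (Int.cast : ℤ → ZMod 2) ((he x).add_eq_neg_one (he (-x)))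
    push_cast at h
    exact h

section Compact

variable [PseudoMetricSpace X] [CompactSpace X] {U : ι → Set Y} {θ : LogCocycle U} {φ : C(X, Y)}

lemma eventually_norm_log_div_lt [Neg X] (σ : OddSection θ φ) {i : ι} (hU : IsOpen (U i))
    {K : Set X} (hK : IsClosed K) (hKU : K ⊆ φ ⁻¹' U i) :
    ∀ᶠ p in 𝓤 X, p.1 ∈ K → ‖Complex.log (σ.coord i p.2 / σ.coord i p.1)‖ < 1 := by
  refine eventually_uniformity_norm_lt hK
    (F := fun p => Complex.log (σ.coord i p.2 / σ.coord i p.1)) (fun x hx => ?_)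
    (fun x hx => by simp [σ.coord_ne_zero (hKU hx)]) one_pos
  have hcoord : ContinuousAt (σ.coord i) x :=
    (σ.continuousOn_coord i).continuousAt ((hU.preimage φ.continuous).mem_nhds (hKU hx))
  have hne := σ.coord_ne_zero (hKU hx)
  have hfst : ContinuousAt (fun p : X × X => σ.coord i p.1) (x, x) := hcoord.comp' continuousAt_fst
  have hsnd : ContinuousAt (fun p : X × X => σ.coord i p.2) (x, x) := hcoord.comp' continuousAt_snd
  exact (hsnd.div hfst hne).clog (by simp [hne])

lemma eventually_norm_angle_sub_lt (θ : LogCocycle U) (φ : C(X, Y)) {i j : ι}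
    (hi : IsOpen (U i)) (hj : IsOpen (U j)) {K : Set X} (hK : IsClosed K)
    (hKU : K ⊆ φ ⁻¹' (U i ∩ U j)) :
    ∀ᶠ p in 𝓤 X, p.1 ∈ K → ‖θ.angle i j (φ p.2) - θ.angle i j (φ p.1)‖ < 1 := by
  refine eventually_uniformity_norm_lt hK
    (F := fun p => θ.angle i j (φ p.2) - θ.angle i j (φ p.1)) (fun x hx => ?_) (by simp) one_pos
  have hangle : ContinuousAt (fun x => θ.angle i j (φ x)) x :=
    ((θ.continuousOn_angle i j).continuousAt ((hi.inter hj).mem_nhds (hKU hx))).comp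
      φ.continuous.continuousAt
  have hfst : ContinuousAt (fun p : X × X => θ.angle i j (φ p.1)) (x, x) :=
    ContinuousAt.comp (f := Prod.fst) (x := (x, x)) hangle continuousAt_fst
  have hsnd : ContinuousAt (fun p : X × X => θ.angle i j (φ p.2)) (x, x) :=
    ContinuousAt.comp (f := Prod.snd) (x := (x, x)) hangle continuousAt_snd
  exact hsnd.sub hfst

lemma exists_fineIndex [InvolutiveNeg X] [Finite ι] (σ : OddSection θ φ)
    (hneg : Isometry (Neg.neg : X → X)) (hU : ∀ i, IsOpen (U i)) (hcover : ⋃ i, U i = univ) :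
    ∃ ε > 0, Nonempty (σ.FineIndex ε) := by
  obtain ⟨index, K, hindex, hK, r, hr, hball⟩ := exists_even_index_isClosed hneg
    (fun i => (hU i).preimage φ.continuous) (by rw [← preimage_iUnion, hcover, preimage_univ])
    (fun i x hx => by rwa [mem_preimage, σ.map_neg])
  have hlog : ∀ᶠ p in 𝓤 X, ∀ i, p.1 ∈ K i →
      ‖Complex.log (σ.coord i p.2 / σ.coord i p.1)‖ < 1 :=
    eventually_all.2 fun i => σ.eventually_norm_log_div_lt (hU i) (hK i).1 (hK i).2
  have hangle : ∀ᶠ p in 𝓤 X, ∀ i j, p.1 ∈ K i ∩ K j →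
      ‖θ.angle i j (φ p.2) - θ.angle i j (φ p.1)‖ < 1 :=
    eventually_all.2 fun i => eventually_all.2 fun j => eventually_norm_angle_sub_lt θ φ (hU i)
      (hU j) ((hK i).1.inter (hK j).1) (inter_subset_inter (hK i).2 (hK j).2)
  obtain ⟨δ, hδ, hsmall⟩ := Metric.mem_uniformity_dist.1 (hlog.and hangle)
  have hmem {x y : X} (h : dist x y < min r δ) : y ∈ K (index x) :=
    hball x (by rw [Metric.mem_ball, dist_comm]; exact h.trans_le (min_le_left _ _))
  have hself (x : X) : x ∈ K (index x) := hball x (Metric.mem_ball_self hr)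
  exact ⟨min r δ, lt_min hr hδ, ⟨{
    index := index
    index_neg := hindex
    mem := fun h => (hK _).2 (hmem h)
    norm_drift_lt := fun {x y} h => (hsmall (h.trans_le (min_le_right _ _))).1 _ (hself x)
    norm_angle_sub_lt := fun {x y z} hxy hyz =>
      (hsmall (hyz.trans_le (min_le_right _ _))).2 _ _ ⟨hmem hxy, hself y⟩ }⟩⟩

end Compact

end OddSection

end CechCocycles

section ParallelTransport

open scoped Matrix.Norms.Elementwise unitInterval

variable {m : ℕ}

/-- `v` is a vector of homogeneous coordinates of the point `p`. -/
def Represents (v : Fin (m + 1) → ℂ) (p : CP m) : Prop :=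
  ∃ hv : v ≠ 0, (Projectivization.mk ℂ v hv : CP m) = p

/-- The coefficient of `w` in the orthogonal projection of `v` to the line spanned by `w`. -/
noncomputable def lineCoeff (v w : Fin (m + 1) → ℂ) : ℂ :=
  (star w ⬝ᵥ v) / (star w ⬝ᵥ w)

/-- The matrix of the orthogonal projection onto the line `p`. -/
noncomputable def projector (p : CP m) : Matrix (Fin (m + 1)) (Fin (m + 1)) ℂ :=
  (star (Projectivization.rep p) ⬝ᵥ Projectivization.rep p)⁻¹ •
    Matrix.vecMulVec (Projectivization.rep p) (star (Projectivization.rep p))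

lemma exists_represents (p : CP m) : ∃ v, Represents v p :=
  ⟨Projectivization.rep p, Projectivization.rep_nonzero p, Projectivization.mk_rep p⟩

lemma star_dotProduct_self_ne_zero {v : Fin (m + 1) → ℂ} (hv : v ≠ 0) : star v ⬝ᵥ v ≠ 0 := by
  open scoped ComplexOrder in exact mt dotProduct_star_self_eq_zero.1 hv

lemma lineCoeff_smul (c : ℂ) {w : Fin (m + 1) → ℂ} (hw : w ≠ 0) : lineCoeff (c • w) w = c := by
  rw [lineCoeff, dotProduct_smul, smul_eq_mul,
    mul_div_cancel_right₀ _ (star_dotProduct_self_ne_zero hw)]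

lemma lineCoeff_neg (v w : Fin (m + 1) → ℂ) : lineCoeff (-v) w = -lineCoeff v w := by
  simp [lineCoeff, neg_div]

namespace Represents

variable {p : CP m} {v w : Fin (m + 1) → ℂ}

lemma ne_zero (hv : Represents v p) : v ≠ 0 := hv.1

lemma smul (hv : Represents v p) {c : ℂ} (hc : c ≠ 0) : Represents (c • v) p := by
  obtain ⟨hv, rfl⟩ := hv
  exact ⟨smul_ne_zero hc hv, (Projectivization.mk_eq_mk_iff' ℂ _ _ _ _).2 ⟨c, rfl⟩⟩

lemma exists_smul_eq (hv : Represents v p) (hw : Represents w p) : ∃ c : ℂ, c ≠ 0 ∧ c • w = v := by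
  obtain ⟨hv, rfl⟩ := hv
  obtain ⟨hw, h⟩ := hw
  obtain ⟨c, rfl⟩ := (Projectivization.mk_eq_mk_iff' ℂ _ _ _ _).1 h.symm
  exact ⟨c, left_ne_zero_of_smul hv, rfl⟩

lemma lineCoeff_ne_zero (hv : Represents v p) (hw : Represents w p) : lineCoeff v w ≠ 0 := by
  obtain ⟨c, hc, rfl⟩ := hv.exists_smul_eq hw
  rwa [lineCoeff_smul c hw.ne_zero]

lemma lineCoeff_smul_eq (hv : Represents v p) (hw : Represents w p) : lineCoeff v w • w = v := by
  obtain ⟨c, -, rfl⟩ := hv.exists_smul_eq hw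
  rw [lineCoeff_smul c hw.ne_zero]

lemma projector_eq (hv : Represents v p) :
    projector p = (star v ⬝ᵥ v)⁻¹ • Matrix.vecMulVec v (star v) := by
  obtain ⟨c, hc, hrep⟩ := Represents.exists_smul_eq
    ⟨Projectivization.rep_nonzero p, Projectivization.mk_rep p⟩ hv
  have hstar : star c ≠ 0 := star_ne_zero.2 hc
  have hnorm := star_dotProduct_self_ne_zero hv.ne_zero
  rw [projector, ← hrep]
  ext i j
  simp only [star_smul, smul_dotProduct, dotProduct_smul, Matrix.smul_apply,
    Matrix.vecMulVec_apply, Pi.smul_apply, smul_eq_mul]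
  field_simp

lemma projector_mulVec (hv : Represents v p) (w : Fin (m + 1) → ℂ) :
    projector p *ᵥ w = lineCoeff w v • v := by
  ext i
  rw [hv.projector_eq, Matrix.smul_mulVec, Matrix.vecMulVec_mulVec]
  simp [lineCoeff]
  ring

lemma projector_mulVec_self (hv : Represents v p) : projector p *ᵥ v = v := by
  rw [hv.projector_mulVec, hv.lineCoeff_smul_eq hv]

end Represents

lemma projector_mul_self (p : CP m) : projector p * projector p = projector p := by
  obtain ⟨v, hv⟩ := exists_represents p
  nth_rewrite 2 3 [hv.projector_eq]
  rw [Matrix.mul_smul, Matrix.mul_vecMulVec, hv.projector_mulVec_self]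

lemma projector_ne_zero (p : CP m) : projector p ≠ 0 := fun h => by
  obtain ⟨v, hv⟩ := exists_represents p
  exact hv.ne_zero (by rw [← hv.projector_mulVec_self, h, Matrix.zero_mulVec])

lemma Represents.projector_mulVec_of_ne_zero {p q : CP m} {w : Fin (m + 1) → ℂ}
    (hw : Represents w p) (h : projector q * projector p ≠ 0) :
    Represents (projector q *ᵥ w) q := by
  obtain ⟨v, hv⟩ := exists_represents q
  have hne : projector q *ᵥ w ≠ 0 := fun h0 => h (by
    rw [hw.projector_eq, Matrix.mul_smul, Matrix.mul_vecMulVec, h0, Matrix.zero_vecMulVec,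
      smul_zero])
  rw [hv.projector_mulVec] at hne ⊢
  exact hv.smul (left_ne_zero_of_smul hne)

/-- The point of `ℂP^m` with given homogeneous coordinates. -/
noncomputable def mkPoint (v : {v : Fin (m + 1) → ℂ // v ≠ 0}) : CP m :=
  Projectivization.mk ℂ v.1 v.2

lemma represents_mkPoint (v : {v : Fin (m + 1) → ℂ // v ≠ 0}) : Represents v.1 (mkPoint v) :=
  ⟨v.2, rfl⟩

lemma isQuotientMap_mkPoint : IsQuotientMap (mkPoint (m := m)) :=
  isQuotientMap_quotient_mk'

lemma continuous_projector : Continuous (projector (m := m)) := by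
  rw [isQuotientMap_mkPoint.continuous_iff]
  have heq : projector ∘ mkPoint = fun v : {v : Fin (m + 1) → ℂ // v ≠ 0} =>
      (star v.1 ⬝ᵥ v.1)⁻¹ • Matrix.vecMulVec v.1 (star v.1) :=
    funext fun v => (represents_mkPoint v).projector_eq
  have hval : Continuous (Subtype.val : {v : Fin (m + 1) → ℂ // v ≠ 0} → _) :=
    continuous_subtype_val
  rw [heq]
  exact ((hval.star.dotProduct hval).inv₀ fun v => star_dotProduct_self_ne_zero v.2).smul
    (hval.matrix_vecMulVec hval.star)

/-- A distance in time below which any two points of the path `γ` are not orthogonal. -/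
noncomputable def stepBound (γ : C(I, CP m)) : ℝ :=
  sInf ((fun p : I × I => dist p.1 p.2 + ‖projector (γ p.1) * projector (γ p.2)‖) '' univ)

lemma continuous_norm_projector_mul :
    Continuous fun x : C(I, CP m) × I × I =>
      dist x.2.1 x.2.2 + ‖projector (x.1 x.2.1) * projector (x.1 x.2.2)‖ := by
  have hfst : Continuous fun x : C(I, CP m) × I × I => projector (x.1 x.2.1) :=
    continuous_projector.comp (by fun_prop)
  have hsnd : Continuous fun x : C(I, CP m) × I × I => projector (x.1 x.2.2) :=
    continuous_projector.comp (by fun_prop)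
  exact (by fun_prop : Continuous fun x : C(I, CP m) × I × I => dist x.2.1 x.2.2).add
    (hfst.matrix_mul hsnd).norm

lemma continuous_stepBound : Continuous (stepBound (m := m)) :=
  isCompact_univ.continuous_sInf
    (f := fun (γ : C(I, CP m)) (p : I × I) =>
      dist p.1 p.2 + ‖projector (γ p.1) * projector (γ p.2)‖)
    continuous_norm_projector_mul

lemma stepBound_pos (γ : C(I, CP m)) : 0 < stepBound γ := by
  have hcont : Continuous fun p : I × I =>
      dist p.1 p.2 + ‖projector (γ p.1) * projector (γ p.2)‖ :=
    continuous_norm_projector_mul.comp (Continuous.prodMk_right γ)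
  obtain ⟨⟨t, t'⟩, -, heq⟩ := isCompact_univ.exists_sInf_image_eq univ_nonempty hcont.continuousOn
  rw [stepBound, heq]
  rcases eq_or_ne t t' with rfl | hne
  · rw [projector_mul_self]
    exact add_pos_of_nonneg_of_pos dist_nonneg (norm_pos_iff.2 (projector_ne_zero _))
  · exact add_pos_of_pos_of_nonneg (dist_pos.2 hne) (norm_nonneg _)

lemma projector_mul_ne_zero {γ : C(I, CP m)} {t t' : I} (h : dist t t' < stepBound γ) :
    projector (γ t) * projector (γ t') ≠ 0 := fun hzero => by
  have hle : stepBound γ ≤ dist t t' + ‖projector (γ t) * projector (γ t')‖ := by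
    refine csInf_le ⟨0, ?_⟩ ⟨(t, t'), trivial, rfl⟩
    rintro _ ⟨p, -, rfl⟩
    exact add_nonneg dist_nonneg (norm_nonneg _)
  rw [hzero, norm_zero, add_zero] at hle
  exact hle.not_gt h

/-- The `j`-th point of a subdivision of `[0, 1]` with steps of half the length `stepBound γ`. -/
noncomputable def node (γ : C(I, CP m)) (j : ℕ) : I :=
  projIcc 0 1 zero_le_one (j * (stepBound γ / 2))

lemma continuous_node (j : ℕ) : Continuous fun γ : C(I, CP m) => node γ j :=
  continuous_projIcc.comp (continuous_const.mul (continuous_stepBound.div_const 2))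

lemma node_zero (γ : C(I, CP m)) : node γ 0 = 0 := by
  rw [node, Nat.cast_zero, zero_mul]
  exact projIcc_left _

lemma dist_node_succ_lt (γ : C(I, CP m)) (j : ℕ) :
    dist (node γ (j + 1)) (node γ j) < stepBound γ := by
  have hpos := stepBound_pos γ
  calc dist (node γ (j + 1)) (node γ j)
      ≤ dist ((j + 1 : ℕ) * (stepBound γ / 2)) (j * (stepBound γ / 2)) := by
        simpa only [node, NNReal.coe_one, one_mul] using
          (LipschitzWith.projIcc zero_le_one).dist_le_mul _ _
    _ = stepBound γ / 2 := by
        rw [Real.dist_eq, ← sub_mul]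
        simpa using (half_pos hpos).le
    _ < stepBound γ := half_lt_self hpos

lemma node_eq_one {γ : C(I, CP m)} {j : ℕ} (hj : 2 / stepBound γ ≤ j) : node γ j = 1 := by
  rw [div_le_iff₀ (stepBound_pos γ)] at hj
  exact projIcc_of_right_le _ (by linarith)

/-- The composition of the projections onto the lines of `γ` at the first `j` nodes. -/
noncomputable def transportUpTo (γ : C(I, CP m)) : ℕ → Matrix (Fin (m + 1)) (Fin (m + 1)) ℂ
  | 0 => 1
  | j + 1 => projector (γ (node γ (j + 1))) * transportUpTo γ j

lemma continuous_transportUpTo (j : ℕ) :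
    Continuous fun γ : C(I, CP m) => transportUpTo γ j := by
  induction j with
  | zero => exact continuous_const
  | succ j ih =>
    have hnode := continuous_node (m := m) (j + 1)
    exact (continuous_projector.comp (by fun_prop)).matrix_mul ih

lemma represents_transportUpTo_mulVec {γ : C(I, CP m)} {v : Fin (m + 1) → ℂ}
    (hv : Represents v (γ 0)) (j : ℕ) :
    Represents (transportUpTo γ j *ᵥ v) (γ (node γ j)) := by
  induction j with
  | zero => simpa [transportUpTo, node_zero] using hv
  | succ j ih =>
    rw [transportUpTo, ← Matrix.mulVec_mulVec]
    exact ih.projector_mulVec_of_ne_zero (projector_mul_ne_zero (dist_node_succ_lt γ j))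

lemma transportUpTo_eq_of_le {γ : C(I, CP m)} {j k : ℕ} (hj : 2 / stepBound γ ≤ j) (hjk : j ≤ k) :
    transportUpTo γ k = transportUpTo γ j := by
  induction k, hjk using Nat.le_induction with
  | base => rfl
  | succ k hjk ih =>
    have hk : 2 / stepBound γ ≤ k := hj.trans (Nat.cast_le.2 hjk)
    have hk0 : k ≠ 0 := fun h => by
      have hpos := div_pos two_pos (stepBound_pos γ)
      rw [h, Nat.cast_zero] at hk
      exact hk.not_gt hpos
    obtain ⟨k, rfl⟩ := Nat.exists_eq_succ_of_ne_zero hk0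
    rw [← ih, transportUpTo, transportUpTo, ← mul_assoc, node_eq_one hk,
      node_eq_one (hk.trans (by simp)), projector_mul_self]

/-- A discrete parallel transport of the tautological line bundle along the path `γ`. -/
noncomputable def parallelTransport (γ : C(I, CP m)) : Matrix (Fin (m + 1)) (Fin (m + 1)) ℂ :=
  transportUpTo γ ⌈2 / stepBound γ⌉₊

lemma continuous_parallelTransport : Continuous (parallelTransport (m := m)) := by
  refine continuous_iff_continuousAt.2 fun γ₀ => ?_
  have hpos := stepBound_pos γ₀
  have hnear : ∀ᶠ γ in 𝓝 γ₀, stepBound γ₀ / 2 < stepBound γ :=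
    continuous_stepBound.continuousAt.eventually_const_lt (half_lt_self hpos)
  refine (continuous_transportUpTo ⌈4 / stepBound γ₀⌉₊).continuousAt.congr ?_
  filter_upwards [hnear] with γ hγ
  refine transportUpTo_eq_of_le (Nat.le_ceil _) (Nat.ceil_mono ?_)
  rw [div_le_div_iff₀ (stepBound_pos γ) hpos]
  linarith

lemma Represents.parallelTransport_mulVec {γ : C(I, CP m)} {v : Fin (m + 1) → ℂ}
    (hv : Represents v (γ 0)) : Represents (parallelTransport γ *ᵥ v) (γ 1) := by
  rw [← node_eq_one (Nat.le_ceil _)]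
  exact represents_transportUpTo_mulVec hv _

theorem exists_continuous_matrix_of_homotopic {Z : Type*} [TopologicalSpace Z]
    {f g : C(Z, CP m)} (h : f.Homotopic g) :
    ∃ T : Z → Matrix (Fin (m + 1)) (Fin (m + 1)) ℂ, Continuous T ∧
      ∀ z v, Represents v (f z) → Represents (T z *ᵥ v) (g z) := by
  obtain ⟨H⟩ := h
  let path : C(Z, C(I, CP m)) := (H.toContinuousMap.comp ContinuousMap.prodSwap).curry
  refine ⟨fun z => parallelTransport (path z), continuous_parallelTransport.comp path.continuous,
    fun z v hv => ?_⟩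
  have hstart : path z 0 = f z := H.map_zero_left z
  have hend : path z 1 = g z := H.map_one_left z
  rw [← hend]
  exact Represents.parallelTransport_mulVec (hstart ▸ hv)

end ParallelTransport

section Lifts

open unitInterval

variable {m : ℕ} {Z : Type*} [TopologicalSpace Z]

lemma exists_continuous_represents [ContractibleSpace Z] (g : C(Z, CP m)) :
    ∃ u : C(Z, Fin (m + 1) → ℂ), ∀ z, Represents (u z) (g z) := by
  obtain ⟨z₀, ⟨H⟩⟩ := id_nullhomotopic Z
  have hg : (g.comp (ContinuousMap.const Z z₀)).Homotopic (g.comp (.id Z)) :=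
    ContinuousMap.Homotopic.comp (.refl g) ⟨H.symm⟩
  obtain ⟨T, hT, hTrep⟩ := exists_continuous_matrix_of_homotopic hg
  obtain ⟨v, hv⟩ := exists_represents (g z₀)
  exact ⟨⟨fun z => T z *ᵥ v, hT.matrix_mulVec continuous_const⟩, fun z => hTrep z v hv⟩

lemma exists_continuous_exp_eq [ContractibleSpace Z] (g : C(Z, ℂ)) (hg : ∀ z, g z ≠ 0) :
    ∃ θ : C(Z, ℂ), ∀ z, Complex.exp (θ z) = g z := by
  obtain ⟨z₀, ⟨H⟩⟩ := id_nullhomotopic Z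
  let G : C(I × Z, {c : ℂ // c ≠ 0}) :=
    ⟨fun p => ⟨g (H.symm p), hg _⟩, (g.continuous.comp H.symm.continuous).subtype_mk _⟩
  have hG (z : Z) : G (0, z) = ⟨_, Complex.exp_ne_zero (Complex.log (g z₀))⟩ :=
    Subtype.ext (by simp [G, Complex.exp_log (hg z₀)])
  let lift : C(I × Z, ℂ) :=
    Complex.isCoveringMap_exp.liftHomotopy G (.const Z (Complex.log (g z₀))) hG
  have hlift (z : Z) : Complex.exp (lift (1, z)) = G (1, z) :=
    congrArg Subtype.val (congrFun (Complex.isCoveringMap_exp.liftHomotopy_lifts G _ hG) (1, z))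
  exact ⟨⟨fun z => lift (1, z), by fun_prop⟩, fun z => by simpa [G] using hlift z⟩

variable {Y E : Type*} [TopologicalSpace Y] [TopologicalSpace E]

lemma exists_continuousOn_extension [Nonempty E] {s : Set Y} (f : C(s, E)) :
    ∃ F : Y → E, ContinuousOn F s ∧ ∀ y : s, F y = f y := by
  have hext (y : s) : Function.extend (↑) f (fun _ => Classical.arbitrary E) (y : Y) = f y :=
    Subtype.val_injective.extend_apply _ _ y
  refine ⟨_, continuousOn_iff_continuous_domRestrict.2 ?_, hext⟩
  exact f.continuous.congr fun y => (hext y).symm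

variable {s : Set Y}

lemma exists_continuousOn_represents (hs : s.Nonempty → ContractibleSpace s) (g : C(Y, CP m)) :
    ∃ u : Y → Fin (m + 1) → ℂ, ContinuousOn u s ∧ ∀ y ∈ s, Represents (u y) (g y) := by
  rcases s.eq_empty_or_nonempty with rfl | hne
  · exact ⟨fun _ => 0, continuousOn_empty _, by simp⟩
  have := hs hne
  obtain ⟨u, hu⟩ := exists_continuous_represents (g.restrict s)
  obtain ⟨F, hF, hFu⟩ := exists_continuousOn_extension u
  exact ⟨F, hF, fun y hy => hFu ⟨y, hy⟩ ▸ hu ⟨y, hy⟩⟩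

lemma exists_continuousOn_exp_eq (hs : s.Nonempty → ContractibleSpace s) {g : Y → ℂ}
    (hg : ContinuousOn g s) (hne : ∀ y ∈ s, g y ≠ 0) :
    ∃ θ : Y → ℂ, ContinuousOn θ s ∧ ∀ y ∈ s, Complex.exp (θ y) = g y := by
  rcases s.eq_empty_or_nonempty with rfl | hs_ne
  · exact ⟨fun _ => 0, continuousOn_empty _, by simp⟩
  have := hs hs_ne
  obtain ⟨θ, hθ⟩ := exists_continuous_exp_eq
    ⟨s.domRestrict g, continuousOn_iff_continuous_domRestrict.1 hg⟩ fun y => hne y y.2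
  obtain ⟨F, hF, hFθ⟩ := exists_continuousOn_extension θ
  exact ⟨F, hF, fun y hy => (congrArg _ (hFθ ⟨y, hy⟩)).trans (hθ ⟨y, hy⟩)⟩

lemma exists_int_forall_eq_of_isPreconnected (hs : IsPreconnected s) {f : Y → ℂ}
    (hf : ContinuousOn f s) (hexp : ∀ y ∈ s, Complex.exp (f y) = 1) :
    ∃ k : ℤ, ∀ y ∈ s, f y = k * (2 * Real.pi * Complex.I) := by
  have hint (y) (hy : y ∈ s) := Complex.exp_eq_one_iff.1 (hexp y hy)
  rcases s.eq_empty_or_nonempty with rfl | ⟨y₀, hy₀⟩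
  · exact ⟨0, by simp⟩
  obtain ⟨k, hk⟩ := hint y₀ hy₀
  refine ⟨k, fun y hy => hk ▸ hs.induction₂ (fun x y => f y = f x) (fun x hx => ?_)
    (fun _ _ _ _ _ _ h h' => h'.trans h) (fun _ _ _ _ h => h.symm) hy₀ hy⟩
  have hnear : ∀ᶠ y in 𝓝[s] x, ‖f y - f x‖ < 4 :=
    ((hf x hx).sub continuousWithinAt_const).norm.eventually_lt_const (by simp)
  filter_upwards [hnear, self_mem_nhdsWithin] with y hlt hy
  obtain ⟨a, ha⟩ := hint x hx
  obtain ⟨b, hb⟩ := hint y hy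
  rw [ha, hb, ← sub_mul, ← Int.cast_sub] at hlt
  rw [ha, hb, sub_eq_zero.1 (eq_zero_of_norm_intCast_mul_two_pi_I_lt hlt)]

end Lifts

/-- The covers for which the argument works, weaker than good covers: nonempty intersections of
two members are contractible and those of three members are connected. Taking `i = j` shows that
nonempty members are contractible. -/
structure IsWeaklyGoodCover {Y ι : Type*} [TopologicalSpace Y] (U : ι → Set Y) : Prop where
  isOpen i : IsOpen (U i)
  iUnion_eq_univ : ⋃ i, U i = univ
  contractibleSpace_inter i j : (U i ∩ U j).Nonempty → ContractibleSpace ↥(U i ∩ U j)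
  isPreconnected_inter i j k : IsPreconnected (U i ∩ U j ∩ U k)

section Frames

variable {m : ℕ} {Y ι : Type*} [TopologicalSpace Y] {U : ι → Set Y} {g : C(Y, CP m)}

lemma continuousOn_lineCoeff {s : Set Y} {v w : Y → Fin (m + 1) → ℂ} (hv : ContinuousOn v s)
    (hw : ContinuousOn w s) (hne : ∀ y ∈ s, w y ≠ 0) :
    ContinuousOn (fun y => lineCoeff (v y) (w y)) s := by
  rw [continuousOn_iff_continuous_domRestrict] at *
  exact (hw.star.dotProduct hv).div₀ (hw.star.dotProduct hw)
    fun y => star_dotProduct_self_ne_zero (hne y y.2)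

/-- A frame, over each member of the cover `U`, of the pullback along `g` of the tautological line
bundle of `ℂP^m`. -/
structure LocalFrame (g : C(Y, CP m)) (U : ι → Set Y) where
  vec : ι → Y → Fin (m + 1) → ℂ
  continuousOn_vec i : ContinuousOn (vec i) (U i)
  represents_vec {i y} : y ∈ U i → Represents (vec i y) (g y)

lemma IsWeaklyGoodCover.nonempty_localFrame (hU : IsWeaklyGoodCover U) (g : C(Y, CP m)) :
    Nonempty (LocalFrame g U) := by
  have hcontr (i : ι) : (U i).Nonempty → ContractibleSpace (U i) :=
    inter_self (U i) ▸ hU.contractibleSpace_inter i i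
  choose vec hcont hrep using fun i => exists_continuousOn_represents (hcontr i) g
  exact ⟨⟨vec, hcont, fun {i y} => hrep i y⟩⟩

namespace LocalFrame

/-- The logarithmic cocycle `θ` exponentiates to the transition functions of the frame `e`. -/
def IsTransition (e : LocalFrame g U) (θ : LogCocycle U) : Prop :=
  ∀ i j y, y ∈ U i → y ∈ U j → e.vec i y = Complex.exp (θ.angle i j y) • e.vec j y

lemma exists_isTransition (e : LocalFrame g U) (hU : IsWeaklyGoodCover U) :
    ∃ θ, e.IsTransition θ := by
  have hangle (i j : ι) : ∃ θ : Y → ℂ, ContinuousOn θ (U i ∩ U j) ∧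
      ∀ y ∈ U i ∩ U j, Complex.exp (θ y) = lineCoeff (e.vec i y) (e.vec j y) :=
    exists_continuousOn_exp_eq (hU.contractibleSpace_inter i j)
      (continuousOn_lineCoeff ((e.continuousOn_vec i).mono inter_subset_left)
        ((e.continuousOn_vec j).mono inter_subset_right)
        fun _ hy => (e.represents_vec hy.2).ne_zero)
      fun y hy => (e.represents_vec hy.1).lineCoeff_ne_zero (e.represents_vec hy.2)
  choose angle hcont hexp using hangle
  have htrans {i j : ι} {y : Y} (hi : y ∈ U i) (hj : y ∈ U j) :
      e.vec i y = Complex.exp (angle i j y) • e.vec j y := by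
    rw [hexp i j y ⟨hi, hj⟩, (e.represents_vec hi).lineCoeff_smul_eq (e.represents_vec hj)]
  have hcocycle {i j k : ι} {y : Y} (hy : y ∈ U i ∩ U j ∩ U k) :
      Complex.exp (angle i j y + angle j k y - angle i k y) = 1 := by
    obtain ⟨⟨hi, hj⟩, hk⟩ := hy
    have hmul := htrans hi hj
    rw [htrans hj hk, htrans hi hk, smul_smul] at hmul
    rw [Complex.exp_sub, Complex.exp_add,
      ← smul_left_injective ℂ (e.represents_vec hk).ne_zero hmul,
      div_self (Complex.exp_ne_zero _)]
  choose index hindex using fun i j k =>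
    exists_int_forall_eq_of_isPreconnected (hU.isPreconnected_inter i j k)
      ((((hcont i j).mono fun y hy => hy.1).add ((hcont j k).mono fun y hy => ⟨hy.1.2, hy.2⟩)).sub
        ((hcont i k).mono fun y hy => ⟨hy.1.1, hy.2⟩)) fun y hy => hcocycle hy
  exact ⟨⟨angle, index, hcont, fun hi hj hk => hindex _ _ _ _ ⟨⟨hi, hj⟩, hk⟩⟩,
    fun i j y => htrans⟩

/-- The odd section given, in the coordinates of the frame `e`, by an odd lift `κ` of `g ∘ φ` to
homogeneous coordinates. -/
noncomputable def oddSection {X : Type*} [TopologicalSpace X] [Neg X] (e : LocalFrame g U)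
    {θ : LogCocycle U} (hθ : e.IsTransition θ) {φ : C(X, Y)} (hφ : ∀ x, φ (-x) = φ x)
    {κ : C(X, Fin (m + 1) → ℂ)} (hκ : ∀ x, κ (-x) = -κ x)
    (hrep : ∀ x, Represents (κ x) (g (φ x))) : OddSection θ φ where
  coord i x := lineCoeff (κ x) (e.vec i (φ x))
  map_neg := hφ
  continuousOn_coord i :=
    continuousOn_lineCoeff κ.continuous.continuousOn
      ((e.continuousOn_vec i).comp φ.continuous.continuousOn fun _ hx => hx)
      fun x hx => (e.represents_vec hx).ne_zero
  coord_ne_zero hx := (hrep _).lineCoeff_ne_zero (e.represents_vec hx)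
  coord_neg _ := by rw [hφ, hκ, lineCoeff_neg]
  coord_eq {i j x} hi hj := by
    have hji : κ x = (lineCoeff (κ x) (e.vec i (φ x)) * Complex.exp (θ.angle i j (φ x))) •
        e.vec j (φ x) := by
      rw [mul_smul, ← hθ i j _ hi hj, (hrep x).lineCoeff_smul_eq (e.represents_vec hi)]
    nth_rewrite 1 [hji]
    exact lineCoeff_smul _ (e.represents_vec hj).ne_zero

end LocalFrame

end Frames

section OddLift

variable {m : ℕ}

lemma exists_injective_linearMap_piLp (m : ℕ) :
    ∃ L : PiLp 1 (fun _ : Fin (2 * m + 1) => ℝ) →ₗ[ℝ] Fin (m + 1) → ℂ,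
      Function.Injective L := by
  refine finrank_le_iff_exists_linearMap.1 ?_
  rw [(WithLp.linearEquiv 1 ℝ (Fin (2 * m + 1) → ℝ)).finrank_eq, Module.finrank_fin_fun,
    Module.finrank_pi_fintype]
  simp
  omega

lemma mkPoint_neg (v : {v : Fin (m + 1) → ℂ // v ≠ 0}) :
    mkPoint ⟨-v.1, neg_ne_zero.2 v.2⟩ = mkPoint v :=
  (Projectivization.mk_eq_mk_iff' ℂ _ _ _ _).2 ⟨-1, neg_one_smul ℂ v.1⟩

theorem exists_even_map_odd_lift {Y : Type*} [TopologicalSpace Y] {f : C(CP m, Y)}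
    {g : C(Y, CP m)} (h : (g.comp f).Homotopic (.id (CP m))) :
    ∃ (φ : C(L1Sphere (2 * m), Y)) (κ : C(L1Sphere (2 * m), Fin (m + 1) → ℂ)),
      (∀ x, φ (-x) = φ x) ∧ (∀ x, κ (-x) = -κ x) ∧ ∀ x, Represents (κ x) (g (φ x)) := by
  obtain ⟨L, hL⟩ := exists_injective_linearMap_piLp m
  have hcont : Continuous fun x : L1Sphere (2 * m) => L x :=
    L.continuous_of_finiteDimensional.comp continuous_subtype_val
  have hne (x : L1Sphere (2 * m)) : L x ≠ 0 :=
    (map_ne_zero_iff L hL).2 (ne_zero_of_mem_unit_sphere x)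
  let point : C(L1Sphere (2 * m), CP m) :=
    ⟨fun x => mkPoint ⟨L x, hne x⟩, isQuotientMap_mkPoint.continuous.comp (hcont.subtype_mk hne)⟩
  have hpoint (x : L1Sphere (2 * m)) : point (-x) = point x := by
    simpa [point] using mkPoint_neg ⟨L x, hne x⟩
  obtain ⟨T, hT, hTrep⟩ := exists_continuous_matrix_of_homotopic h.symm
  refine ⟨f.comp point,
    ⟨fun x => T (point x) *ᵥ L x, (hT.comp point.continuous).matrix_mulVec hcont⟩,
    fun x => congrArg f (hpoint x), fun x => ?_,
    fun x => hTrep (point x) (L x) (represents_mkPoint ⟨L x, hne x⟩)⟩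
  simp [hpoint, Matrix.mulVec_neg]

end OddLift

lemma sum_range_two_mul_add_one (n : ℕ) : ∑ j ∈ Finset.range n, (2 * j + 1) = n ^ 2 := by
  induction n with
  | zero => rfl
  | succ n ih => rw [Finset.sum_range_succ, ih]; ring

section GoodCover

variable {Y : Type*} [TopologicalSpace Y] {U : Finset (Set Y)}

lemma contractibleSpace_of_sInter_eq (hU : IsGoodCover U) {T : Finset (Set Y)} (hTU : T ⊆ U)
    (hT : T.Nonempty) {s : Set Y} (hs : ⋂₀ (T : Set (Set Y)) = s) (hne : s.Nonempty) :
    ContractibleSpace s := by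
  subst hs
  exact hU.2.2 T hTU hT hne

open scoped Classical in
theorem isWeaklyGoodCover_coe (hU : IsGoodCover U) :
    IsWeaklyGoodCover fun i : U => (i : Set Y) where
  isOpen i := hU.1 i i.2
  iUnion_eq_univ := (Set.sUnion_eq_iUnion (s := (U : Set (Set Y)))).symm.trans hU.2.1
  contractibleSpace_inter i j :=
    contractibleSpace_of_sInter_eq hU (T := {i.1, j.1}) (by simp [Finset.insert_subset_iff])
      (by simp) (by simp)
  isPreconnected_inter i j k := by
    rcases ((i : Set Y) ∩ j ∩ k).eq_empty_or_nonempty with hempty | hne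
    · exact hempty ▸ isPreconnected_empty
    have := contractibleSpace_of_sInter_eq hU (T := {i.1, j.1, k.1})
      (by simp [Finset.insert_subset_iff]) (by simp) (by simp [Set.inter_assoc]) hne
    exact isPreconnected_iff_preconnectedSpace.2 inferInstance

end GoodCover

end CoveringType

open CoveringType

theorem stmt14_general {m : ℕ} {Y ι : Type*} [TopologicalSpace Y] [Fintype ι] {U : ι → Set Y}
    (hU : IsWeaklyGoodCover U) {f : C(CP m, Y)} {g : C(Y, CP m)}
    (h : (g.comp f).Homotopic (.id (CP m))) : (m + 1) ^ 2 ≤ Fintype.card ι := by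
  by_contra! hcard
  obtain ⟨φ, κ, hφ, hκ, hrep⟩ := exists_even_map_odd_lift h
  obtain ⟨e⟩ := hU.nonempty_localFrame g
  obtain ⟨θ, hθ⟩ := e.exists_isTransition hU
  obtain ⟨ε, hε, ⟨F⟩⟩ := (e.oddSection hθ hφ hκ hrep).exists_fineIndex
    (L1Sphere.isometry_neg) hU.isOpen hU.iUnion_eq_univ
  obtain ⟨tower, htower⟩ := L1Sphere.exists_isAntipodalTower (2 * m) hε
  have : Nonempty (L1Sphere (2 * m)) := (NormedSpace.sphere_nonempty.2 zero_le_one).to_subtype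
  obtain ⟨t⟩ := F.nonempty_transgression L1Sphere.isometry_neg hε
  refine t.not_isCoboundaryOn_cupPow htower le_rfl
    (θ.isCocycleOn_chernMod2.isCoboundaryOn_cupPow (isComplex_nerve U) m
      (V := Finset.univ) (fun _ _ _ _ => Finset.mem_univ _) ?_)
  simpa [sum_range_two_mul_add_one] using hcard

/-- The covering type of complex projective space `ℂP^m` is at least `(m+1)²`: every good
cover of any space homotopy equivalent to `ℂP^m` has at least `(m+1)²` members. -/
theorem stmt14 (m : ℕ) (hm : 1 ≤ m) (Y : Type*) [TopologicalSpace Y]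
    (h : Nonempty (ContinuousMap.HomotopyEquiv (CP m) Y))
    (U : Finset (Set Y)) (hU : IsGoodCover U) :
    (m + 1) ^ 2 ≤ U.card := by
  obtain ⟨E⟩ := h
  simpa using stmt14_general (isWeaklyGoodCover_coe hU) E.left_inv
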